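/- arXiv:2010.00952 — 7 statements merged into one kernel-verified Lean document; each statement's English description precedes it below -/
import Mathlib

section
/- Proposition 1 (linear convergence of the other variables in the Davis–Yin algorithm): Suppose γ ∈ (0, 2/L_F̃], and that for some ρ ∈ (0,1] the bound ‖r^k − r*‖² ≤ (1−ρ)^k‖r⁰ − r*‖² holds for every k ≥ 0, where r* = z* + γ·u_G*. Then for every k ≥ 0: (i) ‖z_G^{k+1} − z*‖² ≤ (1−ρ)^k‖r⁰ − r*‖²; (ii) ‖z_J^{k+1} − z*‖² ≤ 4(1−ρ)^k‖r⁰ − r*‖²; (iii) the dual variable u_J^{k+1} := (1/γ)(2·z_G^{k+1} − r^k − γ∇F̃(z_G^{k+1}) − z_J^{k+1}) satisfies ‖u_J^{k+1} + u_G* + ∇F̃(z*)‖² ≤ (4/γ²)(1−ρ)^k‖r⁰ − r*‖²; (iv) the dual variable u_G^{k+1} := (1/γ)(r^k − z_G^{k+1}) satisfies ‖u_G^{k+1} − u_G*‖² ≤ (1/γ²)(1−ρ)^k‖r⁰ − r*‖². -/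
open Filter Topology RealInnerProductSpace

noncomputable section

/-- `p` is a minimizer of `y ↦ σ·G(y) + (1/2)‖y − z‖²`, i.e. `p = prox_{σG}(z)`
(the minimizer is unique when `G` is convex). -/
def IsProxPt {E : Type*} [NormedAddCommGroup E] [InnerProductSpace ℝ E]
    (σ : ℝ) (G : E → ℝ) (z p : E) : Prop :=
  ∀ y, σ * G p + ‖p - z‖ ^ 2 / 2 ≤ σ * G y + ‖y - z‖ ^ 2 / 2

/-- `u ∈ ∂G(z)`. -/
def IsSubgradientAt {E : Type*} [NormedAddCommGroup E] [InnerProductSpace ℝ E]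
    (G : E → ℝ) (z u : E) : Prop :=
  ∀ y, G z + ⟪u, y - z⟫ ≤ G y

lemma le_of_sq_le_sq_aux {a b : ℝ} (hb : 0 ≤ b) (h : a ^ 2 ≤ b ^ 2) : a ≤ b :=
  (abs_le_of_sq_le_sq' h hb).2

/-- A prox point satisfies the variational inequality. -/
lemma prox_vi {E : Type*} [NormedAddCommGroup E] [InnerProductSpace ℝ E]
    {σ : ℝ} (hσ : 0 < σ) {G : E → ℝ} (hG : ConvexOn ℝ Set.univ G) {z p : E}
    (h : IsProxPt σ G z p) (y : E) : ⟪z - p, y - p⟫ ≤ σ * (G y - G p) := by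
  have key : ∀ t : ℝ, 0 < t → t ≤ 1 →
      0 ≤ σ * (G y - G p) - ⟪z - p, y - p⟫ + t * (‖y - p‖ ^ 2 / 2) := by
    intro t ht0 ht1
    have h1 := h ((1 - t) • p + t • y)
    have h2 := hG.2 (Set.mem_univ p) (Set.mem_univ y) (sub_nonneg.2 ht1) ht0.le (by ring)
    have e : (1 - t) • p + t • y - z = -((z - p) - t • (y - p)) := by module
    have e2 : p - z = -(z - p) := by abel
    rw [e, e2, norm_neg, norm_neg, norm_sub_sq_real (z - p), inner_smul_right, norm_smul, mul_pow,
      Real.norm_eq_abs, sq_abs] at h1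
    simp only [smul_eq_mul] at h2
    have h3 := mul_le_mul_of_nonneg_left h2 hσ.le
    have h4 : 0 ≤ t * (σ * (G y - G p) - ⟪z - p, y - p⟫ + t * (‖y - p‖ ^ 2 / 2)) := by
      nlinarith
    exact nonneg_of_mul_nonneg_right h4 ht0
  by_contra hc
  push Not at hc
  set A := ⟪z - p, y - p⟫ - σ * (G y - G p) with hA
  have hApos : 0 < A := by linarith
  set B := ‖y - p‖ ^ 2 / 2 with hB
  have hBn : 0 ≤ B := by positivity
  have h5 := key (min 1 (A / (B + 1) / 2)) (by positivity) (min_le_left _ _)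
  have h6 : min 1 (A / (B + 1) / 2) * B ≤ A / (B + 1) / 2 * B :=
    mul_le_mul_of_nonneg_right (min_le_right _ _) hBn
  have h7 : A / (B + 1) / 2 * B ≤ A / 2 := by
    have : A / (B + 1) * (B + 1) = A := by field_simp
    have : 0 < A / (B + 1) := by positivity
    nlinarith
  linarith

/-- Firm nonexpansiveness against a fixed subgradient. -/
lemma prox_firm {E : Type*} [NormedAddCommGroup E] [InnerProductSpace ℝ E]
    {σ : ℝ} (hσ : 0 < σ) {G : E → ℝ} (hG : ConvexOn ℝ Set.univ G) {z p x u : E}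
    (h : IsProxPt σ G z p) (hu : IsSubgradientAt G x u) :
    ‖p - x‖ ^ 2 ≤ ⟪p - x, z - (x + σ • u)⟫ := by
  have h1 := prox_vi hσ hG h x
  have h2 := mul_le_mul_of_nonneg_left (hu p) hσ.le
  have e : z - (x + σ • u) = (p - x) + ((z - p) - σ • u) := by abel
  have e2 : x - p = -(p - x) := by abel
  rw [e, inner_add_right, real_inner_self_eq_norm_sq, inner_sub_right, inner_smul_right]
  rw [e2, inner_neg_right] at h1
  rw [real_inner_comm (z - p), real_inner_comm u]
  linarith

lemma firm_bounds {E : Type*} [NormedAddCommGroup E] [InnerProductSpace ℝ E]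
    {a b : E} (h : ‖a‖ ^ 2 ≤ ⟪a, b⟫) : ‖a‖ ≤ ‖b‖ ∧ ‖b - a‖ ≤ ‖b‖ := by
  have h0 := norm_sub_sq_real b a
  rw [real_inner_comm] at h0
  constructor
  · have h1 := real_inner_le_norm a b
    by_contra hc
    push Not at hc
    nlinarith [norm_nonneg a, norm_nonneg b]
  · apply le_of_sq_le_sq_aux (norm_nonneg _)
    nlinarith [sq_nonneg ‖a‖]

lemma line_deriv {E : Type*} [NormedAddCommGroup E] [InnerProductSpace ℝ E] [CompleteSpace E]
    {F : E → ℝ} {F' : E → E} (hF : ∀ z, HasGradientAt F (F' z) z) (x v : E) (t : ℝ) :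
    HasDerivAt (fun s : ℝ => F (x + s • v)) ⟪F' (x + t • v), v⟫ t := by
  have h1 : HasDerivAt (fun s : ℝ => x + s • v) v t := by
    simpa using ((hasDerivAt_id t).smul_const v).const_add x
  have h2 := (hF (x + t • v)).hasFDerivAt.comp_hasDerivAt t h1
  have e : ((InnerProductSpace.toDual ℝ E) (F' (x + t • v))) v = ⟪F' (x + t • v), v⟫ := by simp
  rw [← e]
  exact h2

lemma grad_ineq {E : Type*} [NormedAddCommGroup E] [InnerProductSpace ℝ E] [CompleteSpace E]
    {F : E → ℝ} {F' : E → E} (hc : ConvexOn ℝ Set.univ F)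
    (hF : ∀ z, HasGradientAt F (F' z) z) (x y : E) :
    F x + ⟪F' x, y - x⟫ ≤ F y := by
  have hconv : ConvexOn ℝ Set.univ (fun s : ℝ => F (x + s • (y - x))) := by
    refine ⟨convex_univ, fun s _ t _ a b ha hb hab => ?_⟩
    have := hc.2 (Set.mem_univ (x + s • (y - x))) (Set.mem_univ (x + t • (y - x))) ha hb hab
    have e : x + (a • s + b • t) • (y - x)
        = a • (x + s • (y - x)) + b • (x + t • (y - x)) := by
      have hb' : b = 1 - a := by linarith
      subst hb'
      simp only [smul_eq_mul]
      module
    simp only [e]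
    exact this
  have hd := line_deriv hF x (y - x) 0
  have := hconv.le_slope_of_hasDerivAt (Set.mem_univ 0) (Set.mem_univ 1) zero_lt_one hd
  simp [slope_def_field] at this
  linarith

lemma descent {E : Type*} [NormedAddCommGroup E] [InnerProductSpace ℝ E] [CompleteSpace E]
    {F : E → ℝ} {F' : E → E} {L : ℝ} (hF : ∀ z, HasGradientAt F (F' z) z)
    (hlip : ∀ z z', ‖F' z - F' z'‖ ≤ L * ‖z - z'‖) (x v : E) :
    F (x + v) ≤ F x + ⟪F' x, v⟫ + L / 2 * ‖v‖ ^ 2 := by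
  have hd : ∀ t : ℝ, HasDerivAt
      (fun s : ℝ => F (x + s • v) - (s * ⟪F' x, v⟫ + s ^ 2 * (L / 2 * ‖v‖ ^ 2)))
      (⟪F' (x + t • v), v⟫ - (⟪F' x, v⟫ + 2 * t * (L / 2 * ‖v‖ ^ 2))) t := by
    intro t
    refine (line_deriv hF x v t).sub (HasDerivAt.add ?_ ?_)
    · simpa using (hasDerivAt_id t).mul_const ⟪F' x, v⟫
    · simpa using (hasDerivAt_pow 2 t).mul_const (L / 2 * ‖v‖ ^ 2)
  have hanti : AntitoneOn
      (fun s : ℝ => F (x + s • v) - (s * ⟪F' x, v⟫ + s ^ 2 * (L / 2 * ‖v‖ ^ 2)))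
      (Set.Ici 0) := by
    apply antitoneOn_of_deriv_nonpos (convex_Ici 0)
    · exact fun t _ => (hd t).continuousAt.continuousWithinAt
    · exact fun t _ => (hd t).differentiableAt.differentiableWithinAt
    · intro t ht
      rw [interior_Ici, Set.mem_Ioi] at ht
      rw [(hd t).deriv]
      have h1 := real_inner_le_norm (F' (x + t • v) - F' x) v
      have h2 := hlip (x + t • v) x
      rw [add_sub_cancel_left, norm_smul, Real.norm_eq_abs, abs_of_pos ht] at h2
      have h3 := mul_le_mul_of_nonneg_right h2 (norm_nonneg v)
      rw [inner_sub_left] at h1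
      nlinarith
  have := hanti (Set.mem_Ici.2 le_rfl) (Set.mem_Ici.2 zero_le_one) zero_le_one
  simp at this
  linarith

lemma half_coco {E : Type*} [NormedAddCommGroup E] [InnerProductSpace ℝ E] [CompleteSpace E]
    {F : E → ℝ} {F' : E → E} {L : ℝ} (hL : 0 < L) (hc : ConvexOn ℝ Set.univ F)
    (hF : ∀ z, HasGradientAt F (F' z) z)
    (hlip : ∀ z z', ‖F' z - F' z'‖ ≤ L * ‖z - z'‖) (x y : E) :
    F x + ⟪F' x, y - x⟫ + 1 / (2 * L) * ‖F' y - F' x‖ ^ 2 ≤ F y := by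
  have h1 := descent hF hlip y (-(1 / L) • (F' y - F' x))
  have h2 := grad_ineq hc hF x (y + -(1 / L) • (F' y - F' x))
  have e : y + -(1 / L) • (F' y - F' x) - x = (y - x) + -(1 / L) • (F' y - F' x) := by abel
  rw [e, inner_add_right, inner_smul_right] at h2
  rw [inner_smul_right, norm_smul, mul_pow, Real.norm_eq_abs, sq_abs] at h1
  have h3 : ⟪F' y, F' y - F' x⟫ - ⟪F' x, F' y - F' x⟫ = ‖F' y - F' x‖ ^ 2 := by
    rw [← inner_sub_left, real_inner_self_eq_norm_sq]
  have h4 : ⟪F' y, F' y - F' x⟫ = ⟪F' x, F' y - F' x⟫ + ‖F' y - F' x‖ ^ 2 := by linarith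
  rw [h4] at h1
  have e5 : L / 2 * ((-(1 / L)) ^ 2 * ‖F' y - F' x‖ ^ 2)
      = 1 / L * ‖F' y - F' x‖ ^ 2 - 1 / (2 * L) * ‖F' y - F' x‖ ^ 2 := by
    field_simp
    ring
  rw [e5] at h1
  linarith

lemma grad_step {E : Type*} [NormedAddCommGroup E] [InnerProductSpace ℝ E] [CompleteSpace E]
    {F : E → ℝ} {F' : E → E} {L γ : ℝ} (hL : 0 < L) (hc : ConvexOn ℝ Set.univ F)
    (hF : ∀ z, HasGradientAt F (F' z) z)
    (hlip : ∀ z z', ‖F' z - F' z'‖ ≤ L * ‖z - z'‖) (hγ : 0 < γ) (hγ2 : γ ≤ 2 / L) (x y : E) :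
    ‖(y - x) - γ • (F' y - F' x)‖ ≤ ‖y - x‖ := by
  have h1 := half_coco hL hc hF hlip x y
  have h2 := half_coco hL hc hF hlip y x
  rw [norm_sub_rev (F' x), ← neg_sub y x, inner_neg_right] at h2
  have h3 : 1 / L * ‖F' y - F' x‖ ^ 2 ≤ ⟪y - x, F' y - F' x⟫ := by
    rw [real_inner_comm, inner_sub_left]
    have : 1 / L * ‖F' y - F' x‖ ^ 2 = 2 * (1 / (2 * L) * ‖F' y - F' x‖ ^ 2) := by
      field_simp
    linarith
  apply le_of_sq_le_sq_aux (norm_nonneg _)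
  rw [norm_sub_sq_real, inner_smul_right, norm_smul, mul_pow, Real.norm_eq_abs, sq_abs]
  have h4 := mul_le_mul_of_nonneg_right hγ2 (sq_nonneg ‖F' y - F' x‖)
  have h5 : 2 / L * ‖F' y - F' x‖ ^ 2 = 2 * (1 / L * ‖F' y - F' x‖ ^ 2) := by ring
  have h6 := mul_le_mul_of_nonneg_left (h4.trans (h5.le.trans (mul_le_mul_of_nonneg_left h3 zero_le_two))) hγ.le
  nlinarith

/-- Proposition 1: linear convergence of the other variables of the Davis–Yin
algorithm, given linear convergence of `r^k`. -/
theorem davis_yin_other_variables_linear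
    {𝒵 : Type*}
    [NormedAddCommGroup 𝒵] [InnerProductSpace ℝ 𝒵] [FiniteDimensional ℝ 𝒵]
    (Ft G J : 𝒵 → ℝ) (Ft' : 𝒵 → 𝒵) (L_Ft : ℝ)
    (hLFt : 0 < L_Ft)
    (hFtconv : ConvexOn ℝ Set.univ Ft)
    (hGconv : ConvexOn ℝ Set.univ G)
    (hJconv : ConvexOn ℝ Set.univ J)
    (hFtgrad : ∀ z, HasGradientAt Ft (Ft' z) z)
    (hFtlip : ∀ z z', ‖Ft' z - Ft' z'‖ ≤ L_Ft * ‖z - z'‖)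
    -- z* is a minimizer, with dual certificate u_G*
    (zstar : 𝒵)
    (hzstar : ∀ y, Ft zstar + G zstar + J zstar ≤ Ft y + G y + J y)
    (uGstar : 𝒵)
    (huGstar : IsSubgradientAt G zstar uGstar)
    (huGstar' : IsSubgradientAt J zstar (-(Ft' zstar) - uGstar))
    -- constant stepsize
    (γ : ℝ) (hγ0 : 0 < γ) (hγ2 : γ ≤ 2 / L_Ft)
    -- r* = z* + γ u_G*
    (rstar : 𝒵) (hrstar : rstar = zstar + γ • uGstar)
    -- Davis–Yin iterates, r-form
    (r zG zJ : ℕ → 𝒵)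
    (hzG : ∀ k, IsProxPt γ G (r k) (zG (k+1)))
    (hzJ : ∀ k, IsProxPt γ J
      ((2:ℝ) • zG (k+1) - r k - γ • Ft' (zG (k+1))) (zJ (k+1)))
    (hr : ∀ k, r (k+1) = zJ (k+1) + r k - zG (k+1))
    -- assumed linear convergence of r
    (ρ : ℝ) (hρ0 : 0 < ρ) (hρ1 : ρ ≤ 1)
    (hbound : ∀ k : ℕ, ‖r k - rstar‖^2 ≤ (1 - ρ)^k * ‖r 0 - rstar‖^2) :
    ∀ k : ℕ,
      ‖zG (k+1) - zstar‖^2 ≤ (1 - ρ)^k * ‖r 0 - rstar‖^2 ∧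
      ‖zJ (k+1) - zstar‖^2 ≤ 4 * (1 - ρ)^k * ‖r 0 - rstar‖^2 ∧
      ‖(1/γ) • ((2:ℝ) • zG (k+1) - r k - γ • Ft' (zG (k+1)) - zJ (k+1))
          + uGstar + Ft' zstar‖^2
        ≤ 4 / γ^2 * (1 - ρ)^k * ‖r 0 - rstar‖^2 ∧
      ‖(1/γ) • (r k - zG (k+1)) - uGstar‖^2
        ≤ 1 / γ^2 * (1 - ρ)^k * ‖r 0 - rstar‖^2 := by

  intro k
  have : CompleteSpace 𝒵 := FiniteDimensional.complete ℝ 𝒵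
  have hb := hbound k
  have hG := prox_firm hγ0 hGconv (hzG k) huGstar
  rw [← hrstar] at hG
  obtain ⟨a1, a2⟩ := firm_bounds hG
  have hJ := prox_firm hγ0 hJconv (hzJ k) huGstar'
  obtain ⟨c1, c2⟩ := firm_bounds hJ
  have hs := grad_step hLFt hFtconv hFtgrad hFtlip hγ0 hγ2 zstar (zG (k+1))
  have hw : ‖(2:ℝ) • zG (k+1) - r k - γ • Ft' (zG (k+1))
      - (zstar + γ • (-(Ft' zstar) - uGstar))‖ ≤ 2 * ‖r k - rstar‖ := by
    have e : (2:ℝ) • zG (k+1) - r k - γ • Ft' (zG (k+1))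
        - (zstar + γ • (-(Ft' zstar) - uGstar))
        = ((zG (k+1) - zstar) - γ • (Ft' (zG (k+1)) - Ft' zstar))
          - (r k - rstar - (zG (k+1) - zstar)) := by
      rw [hrstar]; module
    rw [e]
    refine (norm_sub_le _ _).trans ?_
    linarith
  have sq4 : ∀ x : ℝ, 0 ≤ x → x ≤ 2 * ‖r k - rstar‖ →
      x ^ 2 ≤ 4 * ((1 - ρ)^k * ‖r 0 - rstar‖^2) := by
    intro x hx0 hx
    have := pow_le_pow_left₀ hx0 hx 2
    nlinarith
  refine ⟨(pow_le_pow_left₀ (norm_nonneg _) a1 2).trans hb, ?_, ?_, ?_⟩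
  · rw [mul_assoc]
    exact sq4 _ (norm_nonneg _) (c1.trans hw)
  · have h := sq4 _ (norm_nonneg _) (c2.trans hw)
    have e : (1/γ) • ((2:ℝ) • zG (k+1) - r k - γ • Ft' (zG (k+1)) - zJ (k+1))
          + uGstar + Ft' zstar = (1/γ) • ((2:ℝ) • zG (k+1) - r k - γ • Ft' (zG (k+1))
      - (zstar + γ • (-(Ft' zstar) - uGstar)) - (zJ (k+1) - zstar)) := by
      match_scalars <;> field_simp <;> ring
    rw [e, norm_smul, mul_pow, Real.norm_eq_abs, sq_abs]
    have := mul_le_mul_of_nonneg_left h (sq_nonneg (1/γ))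
    refine this.trans (le_of_eq ?_)
    ring
  · have h := (pow_le_pow_left₀ (norm_nonneg _) a2 2).trans hb
    have e : (1/γ) • (r k - zG (k+1)) - uGstar
        = (1/γ) • (r k - rstar - (zG (k+1) - zstar)) := by
      rw [hrstar]
      match_scalars <;> field_simp <;> ring
    rw [e, norm_smul, mul_pow, Real.norm_eq_abs, sq_abs]
    have := mul_le_mul_of_nonneg_left h (sq_nonneg (1/γ))
    refine this.trans (le_of_eq ?_)
    ring
end
end

section
/- Asymptotics of the accelerated stepsize sequence: Let a ≥ 0 and b ≥ 0 with a + b > 0, let γ₀ > 0, and define the sequence (γ_k) by the recurrence γ_{k+1} = (−γ_k²·a + γ_k·√((γ_k·a)² + 1 + 2γ_k·b)) / (1 + 2γ_k·b) for all k ≥ 0. Then k·γ_k → 1/(a + b) as k → ∞; in particular γ_k = O(1/k) and γ_{k+1}/γ_k → 1. -/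
open Filter Topology

/-- Asymptotics of the accelerated stepsize sequence (equation (9) of the paper):
`k·γ_k → 1/(a+b)`, `γ_k = O(1/k)` (i.e. `k·γ_k` is bounded), and
`γ_{k+1}/γ_k → 1`; moreover each `γ_k` is positive. -/
theorem accelerated_stepsize_asymptotics
    (a b : ℝ) (ha : 0 ≤ a) (hb : 0 ≤ b) (hab : 0 < a + b)
    (γ : ℕ → ℝ) (hγ0 : 0 < γ 0)
    (hrec : ∀ k : ℕ, γ (k+1) =
      (-((γ k)^2 * a) + γ k * Real.sqrt ((γ k * a)^2 + 1 + 2 * γ k * b))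
        / (1 + 2 * γ k * b)) :
    (∀ k, 0 < γ k) ∧
    Tendsto (fun k : ℕ => (k : ℝ) * γ k) atTop (𝓝 (1 / (a + b))) ∧
    (∃ C : ℝ, ∀ k : ℕ, (k : ℝ) * γ k ≤ C) ∧
    Tendsto (fun k : ℕ => γ (k+1) / γ k) atTop (𝓝 1) := by
  have key : ∀ k, 0 < γ k → γ (k+1) =
      γ k / (Real.sqrt ((γ k * a)^2 + 1 + 2 * γ k * b) + γ k * a) := by
    intro k hk
    have h0 : 0 ≤ γ k * a := by positivity
    have h1 : 0 ≤ γ k * b := by positivity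
    have hS : 0 < Real.sqrt ((γ k * a)^2 + 1 + 2 * γ k * b) :=
      Real.sqrt_pos.mpr (by nlinarith)
    have hS2 : Real.sqrt ((γ k * a)^2 + 1 + 2 * γ k * b) ^ 2 = (γ k * a)^2 + 1 + 2 * γ k * b :=
      Real.sq_sqrt (by nlinarith)
    rw [hrec k]
    generalize Real.sqrt ((γ k * a)^2 + 1 + 2 * γ k * b) = S at *
    rw [div_eq_div_iff (by nlinarith) (by linarith)]
    linear_combination γ k * hS2
  have hpos : ∀ k, 0 < γ k := by
    intro k
    induction k with
    | zero => exact hγ0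
    | succ k ih =>
      rw [key k ih]
      have h1 : 0 ≤ γ k * b := by positivity
      have hS : 0 < Real.sqrt ((γ k * a)^2 + 1 + 2 * γ k * b) :=
        Real.sqrt_pos.mpr (by nlinarith [sq_nonneg (γ k * a)])
      positivity
  have hinc : ∀ k, (γ (k+1))⁻¹ - (γ k)⁻¹ =
      a + (γ k * a^2 + 2 * b) / (Real.sqrt ((γ k * a)^2 + 1 + 2 * γ k * b) + 1) := by
    intro k
    have hk := hpos k
    have h1 : 0 ≤ γ k * b := by positivity
    have hS : 0 < Real.sqrt ((γ k * a)^2 + 1 + 2 * γ k * b) :=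
      Real.sqrt_pos.mpr (by nlinarith [sq_nonneg (γ k * a)])
    have hS2 : Real.sqrt ((γ k * a)^2 + 1 + 2 * γ k * b) ^ 2 = (γ k * a)^2 + 1 + 2 * γ k * b :=
      Real.sq_sqrt (by nlinarith [sq_nonneg (γ k * a)])
    rw [key k hk]
    generalize Real.sqrt ((γ k * a)^2 + 1 + 2 * γ k * b) = S at *
    have h2 : 0 < S + γ k * a := by positivity
    field_simp
    linear_combination hS2
  have hdec : ∀ k, γ k ≤ γ 0 := by
    intro k
    induction k with
    | zero => exact le_rfl
    | succ k ih =>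
      refine le_trans ?_ ih
      have hk := hpos k
      have h3 := hinc k
      have h4 : 0 ≤ a + (γ k * a^2 + 2 * b) /
        (Real.sqrt ((γ k * a)^2 + 1 + 2 * γ k * b) + 1) := by positivity
      exact (inv_le_inv₀ hk (hpos (k+1))).mp (by linarith)
  obtain ⟨c, hc, hcinc⟩ : ∃ c : ℝ, 0 < c ∧ ∀ k, c ≤ (γ (k+1))⁻¹ - (γ k)⁻¹ := by
    refine ⟨a + (2 * b) / (Real.sqrt ((γ 0 * a)^2 + 1 + 2 * γ 0 * b) + 1), ?_, ?_⟩
    · rcases ha.lt_or_eq with h | h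
      · positivity
      · have : 0 < b := by linarith
        positivity
    · intro k
      rw [hinc k]
      have hk := hpos k
      have hd := hdec k
      have h5 : 0 ≤ γ k * a ^ 2 := by positivity
      gcongr
      linarith
  have hlow : ∀ k : ℕ, (k : ℝ) * c ≤ (γ k)⁻¹ := by
    intro k
    induction k with
    | zero => simpa using hγ0.le
    | succ k ih => push_cast; linarith [hcinc k]
  have hinv : Tendsto (fun k => (γ k)⁻¹) atTop atTop :=
    tendsto_atTop_mono hlow (tendsto_natCast_atTop_atTop.atTop_mul_const hc)
  have hz : Tendsto γ atTop (𝓝 0) := by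
    exact hinv.inv_tendsto_atTop.congr (fun k => by simp)
  have hlim : Tendsto (fun k => (γ (k+1))⁻¹ - (γ k)⁻¹) atTop (𝓝 (a + b)) := by
    have hc0 : ContinuousAt (fun g : ℝ => a + (g * a^2 + 2 * b) /
        (Real.sqrt ((g * a)^2 + 1 + 2 * g * b) + 1)) 0 := by
      refine ContinuousAt.add (by fun_prop) (ContinuousAt.div (by fun_prop) (by fun_prop) ?_)
      positivity
    have h := hc0.tendsto.comp hz
    refine (h.congr (fun k => (hinc k).symm)).trans (le_of_eq ?_)
    congr 1
    norm_num
  have hces := hlim.cesaro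
  have hu : Tendsto (fun k : ℕ => (k : ℝ)⁻¹ * (γ k)⁻¹) atTop (𝓝 (a + b)) := by
    have h6 : Tendsto (fun k : ℕ => (k : ℝ)⁻¹ * (γ 0)⁻¹) atTop (𝓝 0) := by
      simpa using (tendsto_inv_atTop_nhds_zero_nat (𝕜 := ℝ)).mul_const (γ 0)⁻¹
    have h7 := hces.add h6
    rw [add_zero] at h7
    refine h7.congr (fun k => ?_)
    rw [Finset.sum_range_sub (fun i => (γ i)⁻¹)]
    ring
  have hmain : Tendsto (fun k : ℕ => (k : ℝ) * γ k) atTop (𝓝 (1 / (a + b))) := by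
    have h8 := hu.inv₀ hab.ne'
    rw [one_div]
    refine h8.congr (fun k => ?_)
    rw [mul_inv, inv_inv, inv_inv]
  refine ⟨hpos, hmain, ?_, ?_⟩
  · obtain ⟨C, hC⟩ := hmain.bddAbove_range
    exact ⟨C, fun k => hC ⟨k, rfl⟩⟩
  · have hc1 : ContinuousAt (fun g : ℝ =>
        1 / (Real.sqrt ((g * a)^2 + 1 + 2 * g * b) + g * a)) 0 := by
      refine ContinuousAt.div (by fun_prop) (by fun_prop) ?_
      norm_num
    have h := hc1.tendsto.comp hz
    have h9 : ∀ k, 1 / (Real.sqrt ((γ k * a)^2 + 1 + 2 * γ k * b) + γ k * a) =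
        γ (k+1) / γ k := by
      intro k
      have hk := hpos k
      rw [key k hk, div_right_comm, div_self hk.ne']
    refine (h.congr h9).trans (le_of_eq ?_)
    norm_num
end

section
/- Proximity operator of a composition with an operator satisfying QQ* = ηI: Let 𝒵 and 𝒰 be finite-dimensional real inner product spaces, Q : 𝒵 → 𝒰 a continuous linear map with adjoint Q* satisfying Q∘Q* = η·I for some η > 0, and H : 𝒰 → ℝ a convex function. Then for every γ > 0 and every z ∈ 𝒵, the unique minimizer of y ↦ γ·H(Qy) + (1/2)‖y − z‖² is z + (1/η)·Q*(p − Qz), where p is the unique minimizer of v ↦ γη·H(v) + (1/2)‖v − Qz‖². (Via the Moreau identity this yields the formula prox_{H̃*/γ}(x,w) = (K*u, C*u) with u = prox_{H*/(γη)}((Kx+Cw)/η) used to derive the PD3O and PDDY algorithms, where Q(x,w) = Kx + Cw and KK* + CC* = ηI.) -/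
open Filter Topology RealInnerProductSpace

noncomputable section

theorem IsProxPt.eq_of_convex {E : Type*} [NormedAddCommGroup E] [InnerProductSpace ℝ E]
    {σ : ℝ} (hσ : 0 < σ) {G : E → ℝ} (hG : ConvexOn ℝ Set.univ G) {z a b : E}
    (ha : IsProxPt σ G z a) (hb : IsProxPt σ G z b) : a = b := by
  have h1 := ha ((1/2 : ℝ) • a + (1/2 : ℝ) • b)
  have h2 := hb ((1/2 : ℝ) • a + (1/2 : ℝ) • b)
  have hc := hG.2 (Set.mem_univ a) (Set.mem_univ b)
    (show (0:ℝ) ≤ 1/2 by norm_num) (show (0:ℝ) ≤ 1/2 by norm_num) (by norm_num)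
  have hc' := mul_le_mul_of_nonneg_left hc hσ.le
  simp only [smul_eq_mul] at hc'
  have e1 : (1/2 : ℝ) • a + (1/2 : ℝ) • b - z = (1/2 : ℝ) • ((a - z) + (b - z)) := by
    module
  have e2 : a - b = (a - z) - (b - z) := by abel
  have hn : ‖(1/2 : ℝ) • a + (1/2 : ℝ) • b - z‖ ^ 2
      = (1/4) * ‖(a - z) + (b - z)‖ ^ 2 := by
    rw [e1, norm_smul, mul_pow]; norm_num
  have hpar := parallelogram_law_with_norm ℝ (a - z) (b - z)
  rw [← e2] at hpar
  have : ‖a - b‖ ^ 2 ≤ 0 := by nlinarith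
  have h0 : ‖a - b‖ = 0 := by
    have := sq_nonneg ‖a - b‖
    exact pow_eq_zero_iff (two_ne_zero) |>.1 (by linarith)
  exact sub_eq_zero.1 (norm_eq_zero.1 h0)

/-- Proximity operator of `H ∘ Q` when `QQ* = ηI`:
`prox_{γ(H∘Q)}(z) = z + (1/η)·Q*(prox_{γηH}(Qz) − Qz)`. -/
theorem prox_composition_of_row_orthogonal
    {𝒵 𝒰 : Type*}
    [NormedAddCommGroup 𝒵] [InnerProductSpace ℝ 𝒵] [FiniteDimensional ℝ 𝒵]
    [NormedAddCommGroup 𝒰] [InnerProductSpace ℝ 𝒰] [FiniteDimensional ℝ 𝒰]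
    (Q : 𝒵 →L[ℝ] 𝒰) (η : ℝ) (hη : 0 < η)
    (hQ : Q.comp (ContinuousLinearMap.adjoint Q)
      = η • ContinuousLinearMap.id ℝ 𝒰)
    (H : 𝒰 → ℝ) (hH : ConvexOn ℝ Set.univ H)
    (γ : ℝ) (hγ : 0 < γ) (z : 𝒵) (p : 𝒰)
    (hp : IsProxPt (γ * η) H (Q z) p) :
    IsProxPt γ (fun y => H (Q y)) z
      (z + (1/η) • (ContinuousLinearMap.adjoint Q) (p - Q z)) ∧
    ∀ y, IsProxPt γ (fun y' => H (Q y')) z y →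
      y = z + (1/η) • (ContinuousLinearMap.adjoint Q) (p - Q z) := by
  have hQQ : ∀ u, Q (ContinuousLinearMap.adjoint Q u) = η • u := fun u => by
    have := congrArg (fun T : 𝒰 →L[ℝ] 𝒰 => T u) hQ
    simpa using this
  have key : IsProxPt γ (fun y => H (Q y)) z
      (z + (1/η) • (ContinuousLinearMap.adjoint Q) (p - Q z)) := by
    intro y
    have hQx : Q (z + (1/η) • (ContinuousLinearMap.adjoint Q) (p - Q z)) = p := by
      rw [map_add, map_smul, hQQ, smul_smul, one_div_mul_cancel hη.ne', one_smul]
      abel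
    have hA : ∀ u, ‖ContinuousLinearMap.adjoint Q u‖ ^ 2 = η * ‖u‖ ^ 2 := fun u => by
      rw [← real_inner_self_eq_norm_sq, ContinuousLinearMap.adjoint_inner_left, hQQ,
        real_inner_smul_right, real_inner_self_eq_norm_sq]
    have hd : ‖(1/η) • (ContinuousLinearMap.adjoint Q) (p - Q z)‖ ^ 2
        = (1/η) * ‖p - Q z‖ ^ 2 := by
      rw [norm_smul, mul_pow, hA, Real.norm_eq_abs, sq_abs]
      field_simp
    have hy : (1/η) * ‖Q y - Q z‖ ^ 2 ≤ ‖y - z‖ ^ 2 := by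
      have h0 := sq_nonneg ‖(y - z) - (1/η) • (ContinuousLinearMap.adjoint Q) (Q (y - z))‖
      rw [norm_sub_sq_real, real_inner_smul_right, ContinuousLinearMap.adjoint_inner_right,
        real_inner_self_eq_norm_sq, norm_smul, mul_pow, hA, Real.norm_eq_abs, sq_abs] at h0
      have e : (1/η) ^ 2 * (η * ‖Q (y - z)‖ ^ 2) = (1/η) * ‖Q (y - z)‖ ^ 2 := by
        field_simp
      rw [← map_sub]
      linarith
    have h := mul_le_mul_of_nonneg_left (hp (Q y)) (one_div_pos.2 hη).le
    have e : ∀ a b : ℝ, (1/η) * (γ * η * a + b / 2) = γ * a + (1/η) * b / 2 := by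
      intro a b; field_simp
    rw [e, e] at h
    simp only [hQx, add_sub_cancel_left, hd]
    linarith
  refine ⟨key, fun y hy => IsProxPt.eq_of_convex hγ ?_ hy key⟩
  exact hH.comp_linearMap (Q : 𝒵 →ₗ[ℝ] 𝒰)
end
end

section
/- Closed form of the proximity operator of the hinge loss: Let a ∈ ℝ^d with a ≠ 0, b ∈ {−1, 1}, and define H : ℝ^d → ℝ by H(x) = max(1 − b·⟪a, x⟫, 0), and η₀ = ‖a‖². Then for every γ > 0 and every x ∈ ℝ^d, the unique minimizer of y ↦ γ·H(y) + (1/2)‖y − x‖² is x − (b/η₀)·max(min(b·⟪a, x⟫ − 1, 0), −η₀·γ)·a. -/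
open Filter Topology RealInnerProductSpace

noncomputable section

/-- Closed form of the proximity operator of the hinge loss
`H(x) = max(1 − b⟪a, x⟫, 0)`. -/
theorem prox_hinge_loss
    {d : ℕ} (a : EuclideanSpace ℝ (Fin d)) (ha : a ≠ 0)
    (b : ℝ) (hb : b = 1 ∨ b = -1)
    (H : EuclideanSpace ℝ (Fin d) → ℝ)
    (hH : ∀ x, H x = max (1 - b * ⟪a, x⟫) 0)
    (η₀ : ℝ) (hη₀ : η₀ = ‖a‖ ^ 2)
    (γ : ℝ) (hγ : 0 < γ) (x : EuclideanSpace ℝ (Fin d)) :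
    IsProxPt γ H x
      (x - ((b / η₀) * max (min (b * ⟪a, x⟫ - 1) 0) (-(η₀ * γ))) • a) ∧
    ∀ y, IsProxPt γ H x y →
      y = x - ((b / η₀) * max (min (b * ⟪a, x⟫ - 1) 0) (-(η₀ * γ))) • a := by
  have hη : 0 < η₀ := by
    rw [hη₀]; have := norm_pos_iff.mpr ha; positivity
  have hbb : b * b = 1 := by rcases hb with h | h <;> rw [h] <;> norm_num
  obtain ⟨k, hk⟩ : ∃ k, k = max (min (b * ⟪a, x⟫ - 1) 0) (-(η₀ * γ)) / η₀ := ⟨_, rfl⟩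
  have hm : max (min (b * ⟪a, x⟫ - 1) 0) (-(η₀ * γ)) = k * η₀ := by
    rw [hk]; field_simp
  have hc : (b / η₀) * max (min (b * ⟪a, x⟫ - 1) 0) (-(η₀ * γ)) = b * k := by
    rw [hm]; field_simp
  rw [hc]
  have haa : ⟪a, a⟫ = η₀ := by rw [hη₀]; exact real_inner_self_eq_norm_sq a
  obtain ⟨p, hp⟩ : ∃ p, p = x - (b * k) • a := ⟨_, rfl⟩
  rw [← hp]
  have hap : b * ⟪a, p⟫ = b * ⟪a, x⟫ - k * η₀ := by
    rw [hp, inner_sub_right, inner_smul_right, haa]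
    linear_combination (-(k * η₀)) * hbb
  have scalar : ∀ t : ℝ, γ * max (1 - (b * ⟪a, x⟫ - k * η₀)) 0 ≤
      γ * max (1 - t) 0 - k * (t - (b * ⟪a, x⟫ - k * η₀)) := by
    intro t
    generalize b * ⟪a, x⟫ = s at hm
    have h1 : γ * (1 - t) ≤ γ * max (1 - t) 0 :=
      mul_le_mul_of_nonneg_left (le_max_left _ _) hγ.le
    have h2 : 0 ≤ γ * max (1 - t) 0 := mul_nonneg hγ.le (le_max_right _ _)
    have hηγ : 0 < η₀ * γ := mul_pos hη hγ
    rcases le_total 1 s with hs | hs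
    · rw [min_eq_right (by linarith), max_eq_left (by linarith)] at hm
      have hk0 : k = 0 := by
        rcases mul_eq_zero.mp hm.symm with h | h
        · exact h
        · exact absurd h hη.ne'
      subst hk0
      rw [max_eq_right (a := 1 - (s - 0 * η₀)) (by linarith)]
      linarith
    · rw [min_eq_left (by linarith)] at hm
      rcases le_total (-(η₀ * γ)) (s - 1) with h | h
      · rw [max_eq_left h] at hm
        have e : s - k * η₀ = 1 := by linarith
        rw [e, sub_self, max_self]
        have hk0 : k ≤ 0 := by
          by_contra! hh
          have := mul_pos hh hη
          linarith
        have hk1 : -γ ≤ k := by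
          by_contra! hh
          have := mul_lt_mul_of_pos_right hh hη
          linarith
        rcases le_total t 1 with ht | ht
        · nlinarith [mul_nonneg (by linarith : 0 ≤ k + γ) (by linarith : 0 ≤ 1 - t)]
        · nlinarith [mul_nonneg (by linarith : 0 ≤ -k) (by linarith : 0 ≤ t - 1)]
      · rw [max_eq_right h] at hm
        have hk1 : k = -γ := mul_right_cancel₀ hη.ne' (by linarith)
        subst hk1
        rw [max_eq_left (a := 1 - (s - -γ * η₀)) (by linarith)]
        linarith
  have key : ∀ y, γ * H p + ‖p - x‖ ^ 2 / 2 + ‖y - p‖ ^ 2 / 2 ≤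
      γ * H y + ‖y - x‖ ^ 2 / 2 := by
    intro y
    have e1 : y - x = (y - p) + (p - x) := by abel
    have e2 : p - x = -((b * k) • a) := by rw [hp]; abel
    have e3 : ⟪y - p, p - x⟫ = - (k * (b * ⟪a, y⟫ - b * ⟪a, p⟫)) := by
      rw [e2, inner_neg_right, inner_smul_right, real_inner_comm, inner_sub_right]
      ring
    have e4 := norm_add_sq_real (y - p) (p - x)
    rw [← e1, e3] at e4
    have := scalar (b * ⟪a, y⟫)
    rw [← hap] at this
    rw [hH, hH, e4]
    linarith
  refine ⟨fun y => ?_, fun y hy => ?_⟩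
  · have := key y
    have := sq_nonneg ‖y - p‖
    linarith
  · have h1 := key y
    have h2 := hy p
    have h3 : ‖y - p‖ ^ 2 = 0 := le_antisymm (by linarith) (sq_nonneg _)
    exact sub_eq_zero.mp (norm_eq_zero.mp (pow_eq_zero_iff two_ne_zero |>.mp h3))
end
end

section
/- Proximity operator of the conjugate of the Huber function: Let λ > 0 and ν > 0, and define the Huber function h : ℝ → ℝ by h(t) = (λ/(2ν))·t² if |t| ≤ ν and h(t) = λ·(|t| − ν/2) otherwise. Then for every γ > 0 and every t ∈ ℝ, prox_{h*/γ}(t) = t / max(|t|/λ, 1 + ν/(λγ)). Equivalently (via the Moreau identity prox_{h*/γ}(t) = t − (1/γ)·prox_{γh}(γt)): the unique minimizer p of y ↦ γ·h(y) + (1/2)(y − γt)² satisfies t − p/γ = t / max(|t|/λ, 1 + ν/(λγ)). -/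
open Filter Topology

theorem huber_fenchel (lam ν : ℝ) (hlam : 0 < lam) (hν : 0 < ν)
    (h : ℝ → ℝ)
    (hh : ∀ t, h t = if |t| ≤ ν then lam / (2 * ν) * t ^ 2
      else lam * (|t| - ν / 2)) (s : ℝ) (hs : |s| ≤ lam) (y : ℝ) :
    s * y - ν * s ^ 2 / (2 * lam) ≤ h y := by
  rw [hh]
  split_ifs with hy
  · have e : lam / (2 * ν) * y ^ 2 - (s * y - ν * s ^ 2 / (2 * lam))
        = (lam * y - ν * s) ^ 2 / (2 * lam * ν) := by
      field_simp
      ring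
    have : 0 ≤ (lam * y - ν * s) ^ 2 / (2 * lam * ν) := by positivity
    linarith
  · push Not at hy
    have h1 : s * y ≤ |s| * |y| := by
      rw [← abs_mul]
      exact le_abs_self _
    have h2 : (lam - |s|) * ν ≤ (lam - |s|) * |y| :=
      mul_le_mul_of_nonneg_left hy.le (by linarith)
    have e : lam * (|s| - lam / 2) * ν / lam ≤ ν * |s| ^ 2 / (2 * lam) := by
      rw [div_le_div_iff₀ hlam (by positivity)]
      have := mul_nonneg (mul_pos hlam hν).le (sq_nonneg (|s| - lam))
      nlinarith
    have e2 : lam * (|s| - lam / 2) * ν / lam = (|s| - lam / 2) * ν := by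
      field_simp
    rw [sq_abs] at e
    nlinarith

theorem huber_key (lam ν : ℝ) (hlam : 0 < lam) (hν : 0 < ν)
    (h : ℝ → ℝ)
    (hh : ∀ t, h t = if |t| ≤ ν then lam / (2 * ν) * t ^ 2
      else lam * (|t| - ν / 2))
    (γ : ℝ) (hγ : 0 < γ) (t : ℝ) (p : ℝ)
    (hp : ∀ y : ℝ, γ * h p + (p - γ * t) ^ 2 / 2 ≤ γ * h y + (y - γ * t) ^ 2 / 2)
    (s : ℝ) (hs : |s| ≤ lam)
    (hq : h (γ * (t - s)) = s * (γ * (t - s)) - ν * s ^ 2 / (2 * lam)) :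
    t - p / γ = s := by
  have h1 := mul_le_mul_of_nonneg_left (huber_fenchel lam ν hlam hν h hh s hs p) hγ.le
  have h2 := hp (γ * (t - s))
  rw [hq] at h2
  have h3 : (p - γ * (t - s)) ^ 2 ≤ 0 := by
    generalize ν * s ^ 2 / (2 * lam) = c at *
    nlinarith
  have h4 : p - γ * (t - s) = 0 := by
    have := le_antisymm h3 (sq_nonneg _)
    exact pow_eq_zero_iff (two_ne_zero) |>.mp this
  have h5 : p = γ * (t - s) := by linarith
  rw [h5]
  field_simp
  ring

/-- Proximity operator of the conjugate of the Huber function: with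
`h(t) = (λ/(2ν))t²` for `|t| ≤ ν` and `λ(|t| − ν/2)` otherwise, for every
`γ > 0` and `t ∈ ℝ`, the minimizer `p` of `y ↦ γh(y) + (1/2)(y − γt)²`
satisfies `t − p/γ = t / max(|t|/λ, 1 + ν/(λγ))`
(i.e. `prox_{h*/γ}(t) = t / max(|t|/λ, 1 + ν/(λγ))` via the Moreau identity). -/
theorem prox_huber_conjugate
    (lam ν : ℝ) (hlam : 0 < lam) (hν : 0 < ν)
    (h : ℝ → ℝ)
    (hh : ∀ t, h t = if |t| ≤ ν then lam / (2 * ν) * t ^ 2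
      else lam * (|t| - ν / 2))
    (γ : ℝ) (hγ : 0 < γ) (t : ℝ) (p : ℝ)
    (hp : ∀ y : ℝ, γ * h p + (p - γ * t) ^ 2 / 2 ≤ γ * h y + (y - γ * t) ^ 2 / 2) :
    t - p / γ = t / max (|t| / lam) (1 + ν / (lam * γ)) := by
  apply huber_key lam ν hlam hν h hh γ hγ t p hp
  · have hM : 0 < max (|t| / lam) (1 + ν / (lam * γ)) :=
      lt_of_lt_of_le (by positivity) (le_max_right _ _)
    rw [abs_div, abs_of_pos hM, div_le_iff₀ hM]
    have := le_max_left (|t| / lam) (1 + ν / (lam * γ))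
    rw [div_le_iff₀ hlam] at this
    linarith
  · rcases le_or_gt (|t| / lam) (1 + ν / (lam * γ)) with hc | hc
    · rw [max_eq_right hc]
      have hd : 0 < lam * γ + ν := by positivity
      have hs : t / (1 + ν / (lam * γ)) = t * (lam * γ) / (lam * γ + ν) := by
        field_simp
      have hq : γ * (t - t * (lam * γ) / (lam * γ + ν)) = γ * ν * t / (lam * γ + ν) := by
        field_simp
        ring
      have hle : |γ * ν * t / (lam * γ + ν)| ≤ ν := by
        rw [abs_div, abs_mul, abs_of_pos hd, abs_of_pos (mul_pos hγ hν), div_le_iff₀ hd]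
        have : |t| * γ ≤ lam * γ + ν := by
          rw [div_le_iff₀ hlam] at hc
          have e : (1 + ν / (lam * γ)) * lam * γ = lam * γ + ν := by field_simp
          rw [← e]
          exact mul_le_mul_of_nonneg_right hc hγ.le
        nlinarith
      rw [hs, hq, hh, if_pos hle]
      field_simp
      ring
    · rw [max_eq_left hc.le]
      have hc' : lam * γ + ν < |t| * γ := by
        rw [lt_div_iff₀ hlam] at hc
        have e : (1 + ν / (lam * γ)) * lam * γ = lam * γ + ν := by field_simp
        rw [← e]
        exact mul_lt_mul_of_pos_right hc hγ
      rcases le_total 0 t with ht | ht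
      · rw [abs_of_nonneg ht] at hc' ⊢
        have ht0 : 0 < t := by
          by_contra hcon
          have : t = 0 := by linarith
          subst this
          nlinarith [mul_pos hlam hγ]
        have hs : t / (t / lam) = lam := by field_simp
        have hlt : ν < γ * (t - lam) := by linarith
        rw [hs, hh, abs_of_pos (hν.trans hlt), if_neg (not_le.mpr hlt)]
        field_simp
      · rw [abs_of_nonpos ht] at hc' ⊢
        have ht0 : t ≠ 0 := by
          rintro rfl
          nlinarith [mul_pos hlam hγ]
        have hs : t / (-t / lam) = -lam := by field_simp
        have hlt : ν < -(γ * (t - -lam)) := by linarith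
        rw [hs, hh, abs_of_neg (by linarith), if_neg (not_le.mpr hlt)]
        field_simp
end

section
/- Theorem 7 (accelerated Distributed PD3O algorithm, O(1/k²) rate): Suppose the average function (1/M)·Σ_{m=1}^M F_m is μ_F̂-strongly convex and R is μ_R-strongly convex, with μ_F̂ + μ_R > 0, and let x* be the unique minimizer of Ψ. Let κ ∈ (0,1), γ₀ ∈ (0, 2(1−κ)/L), γ₁ = γ₀, where L satisfies the averaged smoothness condition (1/M²)·Σ_m (1/ω_m)·‖∇F_m(x) − ∇F_m(x')‖² ≤ L²·‖x − x'‖² for all x, x', and for every k ≥ 1 set γ_{k+1} = (−γ_k²μ_F̂κ + γ_k·√((γ_kμ_F̂κ)² + 1 + 2γ_kμ_R)) / (1 + 2γ_kμ_R). Suppose η ≥ max_m ‖K_m‖². Then there exists ĉ₀ > 0 such that for every k ≥ 1 the Distributed PD3O iterates satisfy ‖x^{k+1} − x*‖² ≤ (γ_{k+1}²/(1 − γ_{k+1}μ_F̂κ))·ĉ₀; in particular there exists C ≥ 0 with ‖x^{k+1} − x*‖² ≤ C/(k+1)² for all k ≥ 1. -/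
open Filter Topology RealInnerProductSpace

noncomputable section

/-- A limit helper. -/
lemma pd3o_limit (A B : ℝ) (h : ∀ t : ℝ, 0 < t → t ≤ 1 → 0 ≤ A + t * B) : 0 ≤ A := by
  by_contra hA
  push Not at hA
  have hB : 0 < |B| + 1 := by positivity
  have hp : 0 < min 1 (-A / (2 * (|B| + 1))) := by
    apply lt_min one_pos
    apply div_pos <;> linarith
  have h1 := h _ hp (min_le_left _ _)
  have h2 : min 1 (-A / (2 * (|B| + 1))) * B ≤ (-A / (2 * (|B| + 1))) * (|B| + 1) := by
    calc _ ≤ min 1 (-A / (2 * (|B| + 1))) * (|B| + 1) := by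
          apply mul_le_mul_of_nonneg_left _ hp.le
          linarith [le_abs_self B]
      _ ≤ _ := by
          apply mul_le_mul_of_nonneg_right (min_le_right _ _) hB.le
  have h3 : (-A / (2 * (|B| + 1))) * (|B| + 1) = -A / 2 := by
    field_simp
  linarith

section helpers
variable {E : Type*} [NormedAddCommGroup E] [InnerProductSpace ℝ E]

lemma pd3o_norm_line (z y : E) (t : ℝ) :
    ‖(1 - t) • z + t • y‖ ^ 2 = (1 - t) * ‖z‖ ^ 2 + t * ‖y‖ ^ 2 - t * (1 - t) * ‖y - z‖ ^ 2 := by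
  rw [norm_add_sq_real, norm_sub_sq_real, norm_smul, norm_smul, inner_smul_left, inner_smul_right,
    mul_pow, mul_pow, Real.norm_eq_abs, Real.norm_eq_abs, sq_abs, sq_abs, real_inner_comm y z]
  simp
  ring

/-- Strong subgradient inequality. -/
lemma pd3o_strong_subgrad (G : E → ℝ) (μ : ℝ)
    (hG : ConvexOn ℝ Set.univ fun z => G z - μ / 2 * ‖z‖ ^ 2) (z u : E)
    (hu : IsSubgradientAt G z u) (y : E) :
    G z + ⟪u, y - z⟫ + μ / 2 * ‖y - z‖ ^ 2 ≤ G y := by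
  have := pd3o_limit (G y - G z - ⟪u, y - z⟫ - μ / 2 * ‖y - z‖ ^ 2) (μ / 2 * ‖y - z‖ ^ 2) ?_
  · linarith
  intro t ht ht1
  have h1 := hG.2 (Set.mem_univ z) (Set.mem_univ y) (sub_nonneg.2 ht1) ht.le (by ring)
  simp only [smul_eq_mul] at h1
  rw [pd3o_norm_line] at h1
  have h2 := hu ((1 - t) • z + t • y)
  have h3 : (1 - t) • z + t • y - z = t • (y - z) := by module
  rw [h3, inner_smul_right] at h2
  have h4 : 0 ≤ t * (G y - G z - ⟪u, y - z⟫ - μ / 2 * ‖y - z‖ ^ 2 + t * (μ / 2 * ‖y - z‖ ^ 2)) := by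
    nlinarith
  exact nonneg_of_mul_nonneg_right h4 ht

lemma pd3o_strong_mono (G : E → ℝ) (μ : ℝ)
    (hG : ConvexOn ℝ Set.univ fun z => G z - μ / 2 * ‖z‖ ^ 2) (z u z' u' : E)
    (hu : IsSubgradientAt G z u) (hu' : IsSubgradientAt G z' u') :
    μ * ‖z - z'‖ ^ 2 ≤ ⟪u - u', z - z'⟫ := by
  have h1 := pd3o_strong_subgrad G μ hG z u hu z'
  have h2 := pd3o_strong_subgrad G μ hG z' u' hu' z
  rw [← neg_sub z z', norm_neg, inner_neg_right] at h1
  rw [inner_sub_left]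
  linarith

lemma pd3o_mono (G : E → ℝ) (z u z' u' : E)
    (hu : IsSubgradientAt G z u) (hu' : IsSubgradientAt G z' u') :
    0 ≤ ⟪u - u', z - z'⟫ := by
  have h1 := hu z'
  have h2 := hu' z
  rw [← neg_sub z z', inner_neg_right] at h1
  rw [inner_sub_left]
  linarith

lemma pd3o_prox (G : E → ℝ) (hG : ConvexOn ℝ Set.univ G) (σ : ℝ) (hσ : 0 < σ) (z p : E)
    (hp : IsProxPt σ G z p) : IsSubgradientAt G p (σ⁻¹ • (z - p)) := by
  intro y
  have := pd3o_limit (σ * (G y - G p) - ⟪z - p, y - p⟫) (‖y - p‖ ^ 2 / 2) ?_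
  · rw [inner_smul_left]
    simp only [conj_trivial]
    have h2 : σ⁻¹ * ⟪z - p, y - p⟫ ≤ σ⁻¹ * (σ * (G y - G p)) :=
      mul_le_mul_of_nonneg_left (by linarith) (by positivity)
    rw [inv_mul_cancel_left₀ hσ.ne'] at h2
    linarith
  intro t ht ht1
  have h1 := hG.2 (Set.mem_univ p) (Set.mem_univ y) (sub_nonneg.2 ht1) ht.le (by ring)
  simp only [smul_eq_mul] at h1
  have h2 := hp ((1 - t) • p + t • y)
  have h3 : (1 - t) • p + t • y - z = t • (y - p) - (z - p) := by module
  rw [h3, norm_sub_sq_real (t • (y - p)), norm_smul, inner_smul_left, mul_pow, Real.norm_eq_abs, sq_abs,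
    norm_sub_rev p z, real_inner_comm] at h2
  simp only [conj_trivial] at h2
  have h5 := mul_le_mul_of_nonneg_left h1 hσ.le
  have h4 : 0 ≤ t * (σ * (G y - G p) - ⟪z - p, y - p⟫ + t * (‖y - p‖ ^ 2 / 2)) := by
    nlinarith
  exact nonneg_of_mul_nonneg_right h4 ht

lemma pd3o_grad_subgrad [CompleteSpace E] (G : E → ℝ) (hG : ConvexOn ℝ Set.univ G) (z g : E)
    (hg : HasGradientAt G g z) : IsSubgradientAt G z g := by
  intro y
  have hl : HasDerivAt (fun t : ℝ => z + t • (y - z)) (y - z) 0 := by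
    simpa using ((hasDerivAt_id (0 : ℝ)).smul_const (y - z)).const_add z
  have hf : HasFDerivAt G (InnerProductSpace.toDual ℝ E g) (z + (0 : ℝ) • (y - z)) := by
    simpa using hg.hasFDerivAt
  have hd := hf.comp_hasDerivAt (0 : ℝ) hl
  have hc : ConvexOn ℝ Set.univ (G ∘ fun t : ℝ => z + t • (y - z)) := by
    refine ⟨convex_univ, ?_⟩
    intro s _ t _ α β hα hβ hαβ
    have h := hG.2 (Set.mem_univ (z + s • (y - z))) (Set.mem_univ (z + t • (y - z))) hα hβ hαβ
    have e : α • (z + s • (y - z)) + β • (z + t • (y - z)) = z + (α • s + β • t) • (y - z) := by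
      have : α = 1 - β := by linarith
      subst this
      simp only [smul_eq_mul]
      module
    rw [e] at h
    exact h
  have h := hc.le_slope_of_hasDerivAt (Set.mem_univ 0) (Set.mem_univ 1) one_pos hd
  simp [slope_def_field] at h
  linarith

/-- Cocoercivity, with a non-sharp constant. -/
lemma pd3o_coco [CompleteSpace E] (f : E → ℝ) (g : E → E) (hf : ConvexOn ℝ Set.univ f)
    (hg : ∀ z, HasGradientAt f (g z) z) (l : ℝ) (hl : 0 < l)
    (hlip : ∀ z z', ‖g z - g z'‖ ≤ l * ‖z - z'‖) (z z' : E) :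
    ‖g z - g z'‖ ^ 2 ≤ 2 * l * ⟪g z - g z', z - z'⟫ := by
  have hs : ∀ z, IsSubgradientAt f z (g z) := fun z => pd3o_grad_subgrad f hf z _ (hg z)
  have key : ∀ a b : E, f b + ⟪g b, a - b⟫ + ‖g a - g b‖ ^ 2 / (4 * l) ≤ f a := by
    intro a b
    set δ := g a - g b with hδ
    set c := a - (1 / (2 * l)) • δ with hc
    have h1 := hs b c
    have h2 := hs c a
    have h3 : ⟪g a - g c, a - c⟫ ≤ l * ‖a - c‖ ^ 2 := by
      calc _ ≤ ‖g a - g c‖ * ‖a - c‖ := real_inner_le_norm _ _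
        _ ≤ (l * ‖a - c‖) * ‖a - c‖ := by gcongr; exact hlip _ _
        _ = _ := by ring
    have e1 : a - c = (1 / (2 * l)) • δ := by rw [hc]; abel
    have e2 : c - b = (a - b) - (1 / (2 * l)) • δ := by rw [hc]; abel
    rw [e1] at h2
    rw [e1, norm_smul, mul_pow, Real.norm_eq_abs, sq_abs] at h3
    rw [e2, inner_sub_right] at h1
    rw [inner_sub_left] at h3
    have e3 : ⟪g a, (1 / (2 * l)) • δ⟫ - ⟪g b, (1 / (2 * l)) • δ⟫ = (1 / (2 * l)) * ‖δ‖ ^ 2 := by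
      rw [← inner_sub_left, ← hδ, inner_smul_right, real_inner_self_eq_norm_sq]
    have h2' : f c ≤ f a - ⟪g a, (1 / (2 * l)) • δ⟫ + l * ((1 / (2 * l)) ^ 2 * ‖δ‖ ^ 2) := by
      have e4 : c - a = - ((1 / (2 * l)) • δ) := by rw [hc]; abel
      linarith
    have e5 : l * ((1 / (2 * l)) ^ 2 * ‖δ‖ ^ 2) = ‖δ‖ ^ 2 / (4 * l) := by
      field_simp; ring
    have e6 : (1 / (2 * l)) * ‖δ‖ ^ 2 = 2 * (‖δ‖ ^ 2 / (4 * l)) := by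
      field_simp; ring
    linarith
  have k1 := key z z'
  have k2 := key z' z
  rw [norm_sub_rev (g z') (g z), ← neg_sub z z', inner_neg_right] at k2
  have k3 : 2 * (‖g z - g z'‖ ^ 2 / (4 * l)) ≤ ⟪g z - g z', z - z'⟫ := by
    rw [inner_sub_left]; linarith
  have e : 2 * (‖g z - g z'‖ ^ 2 / (4 * l)) = ‖g z - g z'‖ ^ 2 / (2 * l) := by field_simp; ring
  rw [e, div_le_iff₀ (by positivity)] at k3
  linarith

/-- Per-node one-step inequality. -/
lemma pd3o_step [CompleteSpace E] {U : Type*} [NormedAddCommGroup U] [InnerProductSpace ℝ U]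
    [CompleteSpace U] (K : E →L[ℝ] U) (η : ℝ) (hη : ‖K‖ ^ 2 ≤ η) (V V' : U) (A A' d δ : E)
    (s s' : ℝ)
    (hA' : A' = s' • d - δ - (ContinuousLinearMap.adjoint K) V')
    (hm : 0 ≤ ⟪V', η • (V - V') + K (s • d + (A' + (ContinuousLinearMap.adjoint K) V')
      - (A + (ContinuousLinearMap.adjoint K) V))⟫) :
    ‖A'‖ ^ 2 + (η * ‖V'‖ ^ 2 - ‖(ContinuousLinearMap.adjoint K) V'‖ ^ 2) ≤
      ‖A‖ ^ 2 + (η * ‖V‖ ^ 2 - ‖(ContinuousLinearMap.adjoint K) V‖ ^ 2)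
      + ‖d‖ ^ 2 * (s' ^ 2 + s ^ 2) - 2 * s' * ⟪δ, d⟫ + ‖δ‖ ^ 2 - 2 * s * ⟪A, d⟫ := by
  have hP : ‖(ContinuousLinearMap.adjoint K) (V - V')‖ ^ 2 ≤ η * ‖V - V'‖ ^ 2 := by
    have h := (ContinuousLinearMap.adjoint K).le_opNorm (V - V')
    rw [LinearIsometryEquiv.norm_map] at h
    calc _ ≤ (‖K‖ * ‖V - V'‖) ^ 2 := by gcongr
      _ = ‖K‖ ^ 2 * ‖V - V'‖ ^ 2 := by ring
      _ ≤ _ := by gcongr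
  rw [inner_add_right, ← ContinuousLinearMap.adjoint_inner_left, inner_smul_right] at hm
  rw [map_sub] at hP
  set W := (ContinuousLinearMap.adjoint K) V with hW
  set W' := (ContinuousLinearMap.adjoint K) V' with hW'
  have hWe : W' = s' • d - δ - A' := by rw [hA']; abel
  have hsq : 0 ≤ ‖A' - A - ((s' - s) • d - δ)‖ ^ 2 := by positivity
  rw [norm_sub_sq_real] at hP
  rw [norm_sub_sq_real V V'] at hP
  rw [inner_sub_right V' V V', real_inner_self_eq_norm_sq, real_inner_comm] at hm
  have e1 : ⟪W', s • d + (A' + W') - (A + W)⟫ = ⟪W', s • d + A' - A⟫ + ‖W'‖ ^ 2 - ⟪W, W'⟫ := by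
    rw [← real_inner_self_eq_norm_sq, real_inner_comm W' W, ← inner_add_right, ← inner_sub_right]
    congr 1
    abel
  rw [e1] at hm
  have e2 : 2 * ⟪W', s • d + A' - A⟫ = - ‖A' - A - ((s' - s) • d - δ)‖ ^ 2 - ‖A'‖ ^ 2 + ‖A‖ ^ 2
      + ‖d‖ ^ 2 * (s' ^ 2 + s ^ 2) - 2 * s' * ⟪δ, d⟫ + ‖δ‖ ^ 2 - 2 * s * ⟪A, d⟫ := by
    rw [hWe]
    simp only [← real_inner_self_eq_norm_sq, inner_sub_left, inner_sub_right, inner_add_right,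
      inner_smul_left, inner_smul_right, conj_trivial,
      real_inner_comm d A, real_inner_comm d A', real_inner_comm d δ, real_inner_comm A A',
      real_inner_comm A δ, real_inner_comm A' δ]
    ring
  linarith

end helpers

/-- Stepsize recursion. -/
lemma pd3o_gamma (g g' a b : ℝ) (hg : 0 < g) (ha : 0 ≤ a) (hb : 0 ≤ b)
    (h : g' = (-(g ^ 2 * a) + g * Real.sqrt ((g * a) ^ 2 + 1 + 2 * g * b)) / (1 + 2 * g * b)) :
    0 < g' ∧ g'⁻¹ ^ 2 - 2 * a * g'⁻¹ = g⁻¹ ^ 2 + 2 * b * g⁻¹ := by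
  set S := Real.sqrt ((g * a) ^ 2 + 1 + 2 * g * b) with hS
  have hS2 : S ^ 2 = (g * a) ^ 2 + 1 + 2 * g * b := Real.sq_sqrt (by positivity)
  have hD : 0 < 1 + 2 * g * b := by positivity
  have hlt : g * a < S := by
    apply Real.lt_sqrt_of_sq_lt
    have : 0 ≤ g * b := by positivity
    linarith
  have hpos : 0 < g' := by
    rw [h]
    apply div_pos _ hD
    nlinarith
  refine ⟨hpos, ?_⟩
  have h1 : g' * (1 + 2 * g * b) = -(g ^ 2 * a) + g * S := by
    rw [h]; field_simp
  have h2 : (1 + 2 * g * b) * ((1 + 2 * g * b) * g' ^ 2 + 2 * a * g ^ 2 * g' - g ^ 2) = 0 := by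
    have : (g' * (1 + 2 * g * b) + g ^ 2 * a) ^ 2 = g ^ 2 * S ^ 2 := by rw [h1]; ring
    rw [hS2] at this
    linear_combination this
  have h3 := (mul_eq_zero.1 h2).resolve_left hD.ne'
  field_simp
  linear_combination -h3

lemma pd3o_t (a b t t' t₁ : ℝ) (ha : 0 ≤ a) (hb : 0 ≤ b) (hab : 0 < a + b) (ht : 0 < t)
    (ht' : 0 < t') (h1 : 0 < t₁) (h1t : t₁ ≤ t)
    (h : t' ^ 2 - 2 * a * t' = t ^ 2 + 2 * b * t) :
    2 * a < t' ∧ t + min ((a + b) / 2) t₁ ≤ t' ∧ t' ≤ t + b + 2 * a := by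
  have h2 : 2 * a < t' := by
    by_contra hc
    push Not at hc
    have : 0 < t ^ 2 := by positivity
    nlinarith [mul_nonneg hb ht.le]
  refine ⟨h2, ?_, ?_⟩
  · set c := min ((a + b) / 2) t₁ with hc
    have c1 : c ≤ (a + b) / 2 := min_le_left _ _
    have c2 : c ≤ t₁ := min_le_right _ _
    have c0 : 0 < c := lt_min (by linarith) h1
    by_contra hn
    push Not at hn
    have k1 : (t + c - t') * (t + c + t' - 2 * a) > 0 := by
      apply mul_pos <;> linarith
    have k2 : (t + c) ^ 2 - 2 * a * (t + c) ≤ t ^ 2 + 2 * b * t := by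
      nlinarith [mul_nonneg ha c0.le, mul_le_mul_of_nonneg_left (c2.trans h1t) c0.le,
        mul_le_mul_of_nonneg_right c1 ht.le]
    nlinarith
  · by_contra hn
    push Not at hn
    have k1 : (t' - (t + b + 2 * a)) * (t' + (t + b + 2 * a) - 2 * a) > 0 := by
      apply mul_pos <;> linarith
    nlinarith [mul_nonneg ha hb, mul_nonneg ha ht.le, sq_nonneg b]

lemma pd3o_bdd (e : ℕ → ℝ) (N : ℕ) (h : ∀ k, N ≤ k → e (k + 1) ≤ e k) :
    ∃ B : ℝ, 0 < B ∧ ∀ k, e k ≤ B := by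
  have hn : 0 ≤ ∑ i ∈ Finset.range (N + 1), |e i| := Finset.sum_nonneg fun i _ => abs_nonneg _
  refine ⟨1 + ∑ i ∈ Finset.range (N + 1), |e i|, by linarith, ?_⟩
  have hs : ∀ k, k ≤ N → e k ≤ 1 + ∑ i ∈ Finset.range (N + 1), |e i| := by
    intro k hk
    have h1 := Finset.single_le_sum (f := fun i => |e i|) (fun i _ => abs_nonneg _)
      (Finset.mem_range.2 (Nat.lt_succ_of_le hk))
    linarith [le_abs_self (e k)]
  intro k
  induction k with
  | zero => exact hs 0 (Nat.zero_le _)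
  | succ k ih =>
    by_cases hk : k + 1 ≤ N
    · exact hs _ hk
    · exact (h k (by omega)).trans ih

set_option maxHeartbeats 4000000

/-- Theorem 7: `O(1/k²)` rate of the accelerated Distributed PD3O algorithm. -/
theorem distributed_pd3o_accelerated_rate
    {𝒳 : Type*}
    [NormedAddCommGroup 𝒳] [InnerProductSpace ℝ 𝒳] [FiniteDimensional ℝ 𝒳]
    {M : ℕ} (hM : 1 ≤ M)
    {𝒰 : Fin M → Type*}
    [∀ m, NormedAddCommGroup (𝒰 m)] [∀ m, InnerProductSpace ℝ (𝒰 m)]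
    [∀ m, FiniteDimensional ℝ (𝒰 m)]
    (K : ∀ m : Fin M, 𝒳 →L[ℝ] 𝒰 m)
    (R : 𝒳 → ℝ) (F : Fin M → 𝒳 → ℝ) (H : ∀ m : Fin M, 𝒰 m → ℝ)
    (F' : Fin M → 𝒳 → 𝒳)
    (hRconv : ConvexOn ℝ Set.univ R)
    (hFconv : ∀ m, ConvexOn ℝ Set.univ (F m))
    (hHconv : ∀ m, ConvexOn ℝ Set.univ (H m))
    (hFgrad : ∀ m z, HasGradientAt (F m) (F' m z) z)
    (hFlipschitz : ∀ m, ∃ Lm : ℝ, 0 < Lm ∧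
      ∀ z z', ‖F' m z - F' m z'‖ ≤ Lm * ‖z - z'‖)
    -- weights
    (ω : Fin M → ℝ) (hω : ∀ m, 0 < ω m) (hωsum : ∑ m, ω m = 1)
    -- averaged smoothness constant
    (L : ℝ) (hL : 0 < L)
    (havg : ∀ z z' : 𝒳,
      (1 / (M : ℝ)^2) * ∑ m, (1 / ω m) * ‖F' m z - F' m z'‖^2
        ≤ L^2 * ‖z - z'‖^2)
    -- strong convexity of the average of the F_m, and of R
    (μF μR : ℝ) (hμF : 0 ≤ μF) (hμR : 0 ≤ μR) (hμ : 0 < μF + μR)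
    (hFsc : ConvexOn ℝ Set.univ fun z =>
      ((1 / (M : ℝ)) * ∑ m, F m z) - μF / 2 * ‖z‖ ^ 2)
    (hRsc : ConvexOn ℝ Set.univ fun z => R z - μR / 2 * ‖z‖ ^ 2)
    -- Assumption: existence of a primal-dual solution, x* the unique minimizer
    (xstar : 𝒳) (rstar : 𝒳) (hstar : ∀ m : Fin M, 𝒰 m)
    (hrstar : IsSubgradientAt R xstar rstar)
    (hhstar : ∀ m, IsSubgradientAt (H m) (K m xstar) (hstar m))
    (hopt : rstar + (1 / (M : ℝ)) •
      ∑ m, (F' m xstar + (ContinuousLinearMap.adjoint (K m)) (hstar m)) = 0)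
    (hxstar : ∀ y, R xstar + (1 / (M : ℝ)) * ∑ m, (F m xstar + H m (K m xstar))
      ≤ R y + (1 / (M : ℝ)) * ∑ m, (F m y + H m (K m y)))
    -- stepsize rule
    (κ : ℝ) (hκ : 0 < κ) (hκ1 : κ < 1)
    (γ : ℕ → ℝ) (hγ0 : 0 < γ 0) (hγ0' : γ 0 < 2 * (1 - κ) / L)
    (hγ1 : γ 1 = γ 0)
    (hγrec : ∀ k, 1 ≤ k → γ (k+1) =
      (-((γ k)^2 * μF * κ) + γ k * Real.sqrt ((γ k * μF * κ)^2 + 1 + 2 * γ k * μR))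
        / (1 + 2 * γ k * μR))
    -- parameter η
    (η : ℝ) (hη : ∀ m, ‖K m‖ ^ 2 ≤ η)
    -- Distributed PD3O iterates
    (x : ℕ → 𝒳) (q a : ℕ → Fin M → 𝒳) (u : ℕ → ∀ m : Fin M, 𝒰 m)
    (ha0 : ∀ m, a 0 m = q 0 m - (ContinuousLinearMap.adjoint (K m)) (u 0 m))
    (hx : ∀ k, IsProxPt (γ k) R ((γ k / (M : ℝ)) • ∑ m, a k m) (x (k+1)))
    (hq : ∀ k m, q (k+1) m =
      (((M : ℝ) * ω m) / γ (k+1)) • x (k+1) - F' m (x (k+1)))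
    (hu : ∀ k m, ∃ p : 𝒰 m,
      IsProxPt ((γ (k+1) * η) / ((M : ℝ) * ω m)) (H m)
        (((γ (k+1) * η) / ((M : ℝ) * ω m)) •
          (u k m + (1/η) • K m ((((M : ℝ) * ω m) / γ k) • x (k+1)
            + q (k+1) m - q k m))) p ∧
      u (k+1) m = (u k m + (1/η) • K m ((((M : ℝ) * ω m) / γ k) • x (k+1)
            + q (k+1) m - q k m))
        - (((M : ℝ) * ω m) / (γ (k+1) * η)) • p)
    (ha : ∀ k m, a (k+1) m =
      q (k+1) m - (ContinuousLinearMap.adjoint (K m)) (u (k+1) m)) :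
    ∃ c₀ : ℝ, 0 < c₀ ∧
      (∀ k, 1 ≤ k →
        ‖x (k+1) - xstar‖^2 ≤ (γ (k+1))^2 / (1 - γ (k+1) * μF * κ) * c₀) ∧
      ∃ C : ℝ, 0 ≤ C ∧ ∀ k : ℕ, 1 ≤ k →
        ‖x (k+1) - xstar‖^2 ≤ C / ((k : ℝ) + 1)^2 := by
  have hM0 : (0 : ℝ) < M := by exact_mod_cast hM
  set w : Fin M → ℝ := fun m => (M : ℝ) * ω m with hw
  have hwpos : ∀ m, 0 < w m := fun m => mul_pos hM0 (hω m)
  have hωw : ∀ m, ω m * (w m)⁻¹ = (M : ℝ)⁻¹ := by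
    intro m
    have := (hω m).ne'
    simp only [hw]
    field_simp
  -- stepsizes
  set a₀ := μF * κ with ha₀
  have ha₀n : 0 ≤ a₀ := mul_nonneg hμF hκ.le
  have hab : 0 < a₀ + μR := by
    rcases hμF.eq_or_lt with h | h
    · have : 0 < μR := by linarith
      linarith
    · have : 0 < a₀ := mul_pos h hκ
      linarith
  have hrec : ∀ k, 1 ≤ k → 0 < γ k → 0 < γ (k+1) ∧
      (γ (k+1))⁻¹ ^ 2 - 2 * a₀ * (γ (k+1))⁻¹ = (γ k)⁻¹ ^ 2 + 2 * μR * (γ k)⁻¹ := by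
    intro k hk hg
    apply pd3o_gamma _ _ _ _ hg ha₀n hμR
    rw [hγrec k hk, ha₀]
    simp only [mul_assoc]
  have hγpos : ∀ k, 0 < γ k := by
    intro k
    induction k with
    | zero => exact hγ0
    | succ k ih =>
      rcases Nat.eq_zero_or_pos k with h | h
      · subst h; simpa [hγ1] using hγ0
      · exact (hrec k h ih).1
  set t : ℕ → ℝ := fun k => (γ k)⁻¹ with htdef
  have htpos : ∀ k, 0 < t k := fun k => inv_pos.2 (hγpos k)
  have htrec : ∀ k, 1 ≤ k → t (k+1) ^ 2 - 2 * a₀ * t (k+1) = t k ^ 2 + 2 * μR * t k :=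
    fun k hk => (hrec k hk (hγpos k)).2
  set c := min ((a₀ + μR) / 2) (t 1) with hcdef
  have hc0 : 0 < c := lt_min (by linarith) (htpos 1)
  have htlow : ∀ k, 1 ≤ k → t 1 ≤ t k := by
    intro k hk
    induction k, hk using Nat.le_induction with
    | base => exact le_rfl
    | succ k hk ih =>
      have := (pd3o_t a₀ μR (t k) (t (k+1)) (t 1) ha₀n hμR hab (htpos k) (htpos _) (htpos 1) ih
        (htrec k hk)).2.1
      linarith
  have htall : ∀ k, 1 ≤ k → 2 * a₀ < t (k+1) ∧ t k + c ≤ t (k+1) ∧ t (k+1) ≤ t k + μR + 2 * a₀ :=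
    fun k hk => pd3o_t a₀ μR (t k) (t (k+1)) (t 1) ha₀n hμR hab (htpos k) (htpos _) (htpos 1)
      (htlow k hk) (htrec k hk)
  have htlin : ∀ k, 1 ≤ k → c * k ≤ t k := by
    intro k hk
    induction k, hk using Nat.le_induction with
    | base =>
      rw [Nat.cast_one, mul_one]
      exact min_le_right ((a₀ + μR) / 2) (t 1)
    | succ k hk ih =>
      have := (htall k hk).2.1
      push_cast
      linarith
  -- cocoercivity
  choose l hl hlip using hFlipschitz
  set Λ := ∑ m, 2 * l m / w m with hΛ
  have hΛm : ∀ m, 2 * l m / w m ≤ Λ := fun m =>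
    Finset.single_le_sum (f := fun m => 2 * l m / w m)
      (fun i _ => by have := hl i; have := hwpos i; positivity) (Finset.mem_univ m)
  -- shifted quantities
  set V : ℕ → ∀ m, 𝒰 m := fun k m => (w m)⁻¹ • (u k m - hstar m) with hV
  set δ : ℕ → Fin M → 𝒳 := fun k m => (w m)⁻¹ • (F' m (x k) - F' m xstar) with hδ
  set A : ℕ → Fin M → 𝒳 := fun k m => (w m)⁻¹ • (a k m + F' m xstar +
    (ContinuousLinearMap.adjoint (K m)) (hstar m)) - t k • xstar with hA
  set e : ℕ → Fin M → ℝ := fun k m => ‖A k m‖ ^ 2 +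
    (η * ‖V k m‖ ^ 2 - ‖(ContinuousLinearMap.adjoint (K m)) (V k m)‖ ^ 2) with he
  set En : ℕ → ℝ := fun k => ∑ m, ω m * e k m with hEn
  have haall : ∀ k m, a k m = q k m - (ContinuousLinearMap.adjoint (K m)) (u k m) := by
    intro k m
    cases k with
    | zero => exact ha0 m
    | succ k => exact ha k m
  have hAV : ∀ k m, A k m + (ContinuousLinearMap.adjoint (K m)) (V k m)
      = (w m)⁻¹ • (q k m + F' m xstar) - t k • xstar := by
    intro k m
    simp only [hA, hV, haall, map_smul, map_sub]
    module
  have hA1 : ∀ k m, A (k+1) m = t (k+1) • (x (k+1) - xstar) - δ (k+1) m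
      - (ContinuousLinearMap.adjoint (K m)) (V (k+1) m) := by
    intro k m
    rw [eq_sub_iff_add_eq, hAV, hq]
    simp only [hδ]
    have : ((M : ℝ) * ω m) / γ (k+1) = w m * t (k+1) := by simp only [hw, htdef]; ring
    rw [this]
    have h2 : (w m)⁻¹ • ((w m * t (k+1)) • x (k+1)) = t (k+1) • x (k+1) := by
      rw [smul_smul, inv_mul_cancel_left₀ (hwpos m).ne']
    rw [smul_add, smul_sub, h2]
    module
  -- dual inequality
  have hdual : ∀ k m, 0 ≤ ⟪V (k+1) m, η • (V k m - V (k+1) m) + K m (t k • (x (k+1) - xstar)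
      + (A (k+1) m + (ContinuousLinearMap.adjoint (K m)) (V (k+1) m))
      - (A k m + (ContinuousLinearMap.adjoint (K m)) (V k m)))⟫ := by
    intro k m
    have hηn : 0 ≤ η := le_trans (by positivity) (hη m)
    rcases hηn.eq_or_lt with h0 | hηp
    · have hK : K m = 0 := by
        have h1 := hη m
        rw [← h0] at h1
        have h2 : ‖K m‖ = 0 := by
          have := norm_nonneg (K m)
          nlinarith
        exact norm_eq_zero.1 h2
      rw [hK, ← h0]
      simp
    obtain ⟨p, hp, hup⟩ := hu k m
    set v := u k m + (1/η) • K m ((((M : ℝ) * ω m) / γ k) • x (k+1) + q (k+1) m - q k m) with hv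
    set σ := (γ (k+1) * η) / ((M : ℝ) * ω m) with hσ
    have hwm := hwpos m
    have hσe : σ = η * (w m)⁻¹ * γ (k+1) := by simp only [hσ, hw]; ring
    have hσpos : 0 < σ := by
      have := hγpos (k+1)
      rw [hσe]; positivity
    have hsub := pd3o_prox (H m) (hHconv m) σ hσpos _ _ hp
    have hσi : ((M : ℝ) * ω m) / (γ (k+1) * η) = σ⁻¹ := by rw [hσ, inv_div]
    rw [hσi] at hup
    have hue : σ⁻¹ • (σ • v - p) = u (k+1) m := by
      rw [hup, smul_sub, inv_smul_smul₀ hσpos.ne']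
    rw [hue] at hsub
    have hmono := pd3o_mono (H m) _ _ _ _ hsub (hhstar m)
    have hpe : p = σ • (v - u (k+1) m) := by
      rw [hup, sub_sub_cancel, smul_inv_smul₀ hσpos.ne']
    have hvec : η • (V k m - V (k+1) m) + K m (t k • (x (k+1) - xstar)
      + (A (k+1) m + (ContinuousLinearMap.adjoint (K m)) (V (k+1) m))
      - (A k m + (ContinuousLinearMap.adjoint (K m)) (V k m))) = t (k+1) • (p - K m xstar) := by
      rw [hAV, hAV, hpe, hσe, hv]
      have hk1 : ((M : ℝ) * ω m) / γ k = w m * t k := by simp only [hw, htdef]; ring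
      rw [hk1]
      simp only [hV, map_add, map_sub, map_smul]
      have htg : t (k+1) * γ (k+1) = 1 := inv_mul_cancel₀ (hγpos (k+1)).ne'
      have e1 : t (k+1) * (η * (w m)⁻¹ * γ (k+1)) = η * (w m)⁻¹ := by
        linear_combination η * (w m)⁻¹ * htg
      have e2 : ∀ y : 𝒰 m, (η * (w m)⁻¹) • ((1/η) • y) = (w m)⁻¹ • y := by
        intro y
        rw [smul_smul]; congr 1; field_simp
      have e3 : ∀ y : 𝒰 m, (w m)⁻¹ • ((w m * t k) • y) = t k • y := by
        intro y
        rw [smul_smul, inv_mul_cancel_left₀ hwm.ne']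
      rw [smul_sub (t (k+1)), smul_smul, e1, add_sub_right_comm (u k m), smul_add (η * (w m)⁻¹), e2,
        smul_sub ((w m)⁻¹) (_ + _), smul_add ((w m)⁻¹) (_ • _), e3]
      module
    rw [hvec]
    simp only [hV]
    rw [inner_smul_left, inner_smul_right]
    have := htpos (k+1)
    simp only [conj_trivial]
    positivity
  -- primal inequality
  have hprim : ∀ k, (t k + μR) * ‖x (k+1) - xstar‖ ^ 2
      ≤ ⟪∑ m, ω m • A k m, x (k+1) - xstar⟫ := by
    intro k
    have hsub := pd3o_prox R hRconv (γ k) (hγpos k) _ _ (hx k)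
    have hmono := pd3o_strong_mono R μR hRsc _ _ _ _ hsub hrstar
    have hsumA : ∑ m, ω m • A k m = (M : ℝ)⁻¹ • ∑ m, a k m +
        (M : ℝ)⁻¹ • ∑ m, (F' m xstar + (ContinuousLinearMap.adjoint (K m)) (hstar m))
        - t k • xstar := by
      simp only [hA, smul_sub, Finset.sum_sub_distrib, smul_smul, hωw]
      rw [← Finset.sum_smul, ← Finset.sum_mul, hωsum, one_mul, ← smul_add, ← Finset.sum_add_distrib,
        Finset.smul_sum]
      simp only [add_assoc]
    have hr : (M : ℝ)⁻¹ • ∑ m, (F' m xstar + (ContinuousLinearMap.adjoint (K m)) (hstar m))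
        = - rstar := by
      rw [one_div] at hopt
      exact (neg_eq_of_add_eq_zero_right hopt).symm
    have hvec : (γ k)⁻¹ • ((γ k / (M : ℝ)) • ∑ m, a k m - x (k+1)) - rstar
        = ∑ m, ω m • A k m - t k • (x (k+1) - xstar) := by
      rw [hsumA, hr, smul_sub, smul_smul, div_eq_mul_inv, inv_mul_cancel_left₀ (hγpos k).ne']
      simp only [htdef]
      module
    rw [hvec, inner_sub_left, inner_smul_left, real_inner_self_eq_norm_sq] at hmono
    simp only [conj_trivial] at hmono
    linarith
  -- strong convexity of the average
  have hδsum : ∀ k, ∑ m, ω m * ⟪δ k m, x k - xstar⟫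
      = ⟪(1 / (M : ℝ)) • ∑ m, F' m (x k) - (1 / (M : ℝ)) • ∑ m, F' m xstar, x k - xstar⟫ := by
    intro k
    rw [← smul_sub, ← Finset.sum_sub_distrib, inner_smul_left, sum_inner, Finset.mul_sum]
    apply Finset.sum_congr rfl
    intro m _
    simp only [hδ, inner_smul_left, conj_trivial]
    rw [← mul_assoc, hωw, one_div]
  have hFsub : ∀ m z, IsSubgradientAt (F m) z (F' m z) := fun m z =>
    pd3o_grad_subgrad _ (hFconv m) _ _ (hFgrad m z)
  have hFbsub : ∀ z, IsSubgradientAt (fun z => (1 / (M : ℝ)) * ∑ m, F m z) z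
      ((1 / (M : ℝ)) • ∑ m, F' m z) := by
    intro z y
    simp only
    rw [inner_smul_left, sum_inner]
    simp only [conj_trivial]
    rw [← mul_add, ← Finset.sum_add_distrib]
    apply mul_le_mul_of_nonneg_left _ (by positivity)
    exact Finset.sum_le_sum fun m _ => hFsub m z y
  have hFmono : ∀ k, μF * ‖x k - xstar‖ ^ 2 ≤ ∑ m, ω m * ⟪δ k m, x k - xstar⟫ := by
    intro k
    rw [hδsum]
    exact pd3o_strong_mono _ μF hFsc _ _ _ _ (hFbsub _) (hFbsub _)
  have hcoco : ∀ k, ∑ m, ω m * ‖δ k m‖ ^ 2 ≤ Λ * ∑ m, ω m * ⟪δ k m, x k - xstar⟫ := by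
    intro k
    rw [Finset.mul_sum]
    apply Finset.sum_le_sum
    intro m _
    have h1 := pd3o_coco (F m) (F' m) (hFconv m) (hFgrad m) (l m) (hl m) (hlip m) (x k) xstar
    have hwm := hwpos m
    have hlm := hl m
    have h0 : 0 ≤ ⟪F' m (x k) - F' m xstar, x k - xstar⟫ :=
      pd3o_mono (F m) _ _ _ _ (hFsub m _) (hFsub m _)
    have h2 : ‖δ k m‖ ^ 2 = (w m)⁻¹ ^ 2 * ‖F' m (x k) - F' m xstar‖ ^ 2 := by
      simp only [hδ]
      rw [norm_smul, mul_pow, Real.norm_eq_abs, sq_abs]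
    have h3 : ⟪δ k m, x k - xstar⟫ = (w m)⁻¹ * ⟪F' m (x k) - F' m xstar, x k - xstar⟫ := by
      simp only [hδ, inner_smul_left, conj_trivial]
    have h4 : ‖δ k m‖ ^ 2 ≤ Λ * ⟪δ k m, x k - xstar⟫ := by
      rw [h2]
      calc _ ≤ (w m)⁻¹ ^ 2 * (2 * l m * ⟪F' m (x k) - F' m xstar, x k - xstar⟫) := by gcongr
        _ = (2 * l m / w m) * ⟪δ k m, x k - xstar⟫ := by rw [h3]; ring
        _ ≤ _ := by
          apply mul_le_mul_of_nonneg_right (hΛm m)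
          rw [h3]; positivity
    have := mul_le_mul_of_nonneg_left h4 (hω m).le
    linarith
  -- energy inequality
  have hstep : ∀ k, En (k+1) ≤ En k + ‖x (k+1) - xstar‖ ^ 2 * (t (k+1) ^ 2 + t k ^ 2)
      - 2 * t (k+1) * (∑ m, ω m * ⟪δ (k+1) m, x (k+1) - xstar⟫) + ∑ m, ω m * ‖δ (k+1) m‖ ^ 2
      - 2 * t k * ⟪∑ m, ω m • A k m, x (k+1) - xstar⟫ := by
    intro k
    have h1 : ∀ m, ω m * e (k+1) m ≤ ω m * e k m
        + ω m * (‖x (k+1) - xstar‖ ^ 2 * (t (k+1) ^ 2 + t k ^ 2))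
        - 2 * t (k+1) * (ω m * ⟪δ (k+1) m, x (k+1) - xstar⟫) + ω m * ‖δ (k+1) m‖ ^ 2
        - 2 * t k * (ω m * ⟪A k m, x (k+1) - xstar⟫) := by
      intro m
      have h := pd3o_step (K m) η (hη m) (V k m) (V (k+1) m) (A k m) (A (k+1) m)
        (x (k+1) - xstar) (δ (k+1) m) (t k) (t (k+1)) (hA1 k m) (hdual k m)
      have := mul_le_mul_of_nonneg_left h (hω m).le
      simp only [he]
      linarith
    have h2 := Finset.sum_le_sum (s := Finset.univ) fun m _ => h1 m
    rw [Finset.sum_sub_distrib, Finset.sum_add_distrib, Finset.sum_sub_distrib,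
      Finset.sum_add_distrib, ← Finset.mul_sum, ← Finset.mul_sum, ← Finset.sum_mul, hωsum,
      one_mul] at h2
    have h3 : ⟪∑ m, ω m • A k m, x (k+1) - xstar⟫ = ∑ m, ω m * ⟪A k m, x (k+1) - xstar⟫ := by
      rw [sum_inner]
      simp only [inner_smul_left, conj_trivial]
    rw [h3]
    exact h2
  have hdec : ∀ k, 1 ≤ k → Λ ≤ 2 * (1 - κ) * t (k+1) → En (k+1) ≤ En k := by
    intro k hk hL'
    have h1 := hstep k
    have h2 := mul_le_mul_of_nonneg_left (hprim k) (mul_nonneg two_pos.le (htpos k).le)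
    have h3 := hFmono (k+1)
    have h4 := hcoco (k+1)
    have h5 := htrec k hk
    set D := ‖x (k+1) - xstar‖ ^ 2 with hD
    set S := ∑ m, ω m * ⟪δ (k+1) m, x (k+1) - xstar⟫ with hS
    have hDn : 0 ≤ D := by positivity
    have hSn : 0 ≤ S := le_trans (mul_nonneg hμF hDn) h3
    have h6 := mul_le_mul_of_nonneg_right hL' hSn
    have h7 : 2 * a₀ * t (k+1) * D ≤ 2 * κ * t (k+1) * S := by
      have := mul_le_mul_of_nonneg_left h3
        (mul_nonneg (mul_nonneg two_pos.le hκ.le) (htpos (k+1)).le)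
      rw [ha₀]
      linarith
    have h8 : D * (t (k+1) ^ 2 + t k ^ 2) - 2 * t k * ((t k + μR) * D)
        = 2 * a₀ * t (k+1) * D := by
      linear_combination D * h5
    linarith
  obtain ⟨N, hN⟩ := exists_nat_gt (Λ / (2 * (1 - κ) * c))
  have hκ' : 0 < 1 - κ := by linarith
  obtain ⟨B, hB, hEB⟩ := pd3o_bdd En (N + 1) (by
    intro k hk
    apply hdec k (by omega)
    rw [div_lt_iff₀ (by positivity)] at hN
    have h1 := htlin (k+1) (by omega)
    have h2 : (N : ℝ) ≤ ((k+1 : ℕ) : ℝ) := by exact_mod_cast (by omega)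
    have h3 : c * N ≤ t (k+1) := le_trans (mul_le_mul_of_nonneg_left h2 hc0.le) h1
    have h4 := mul_le_mul_of_nonneg_left h3 (mul_nonneg two_pos.le hκ'.le)
    linarith)
  -- bound on the iterates
  have hxB : ∀ k, t k ^ 2 * ‖x (k+1) - xstar‖ ^ 2 ≤ B := by
    intro k
    refine le_trans ?_ (hEB k)
    have hA2 : ∑ m, ω m * ‖A k m‖ ^ 2 ≤ En k := by
      apply Finset.sum_le_sum
      intro m _
      apply mul_le_mul_of_nonneg_left _ (hω m).le
      have h := (ContinuousLinearMap.adjoint (K m)).le_opNorm (V k m)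
      rw [LinearIsometryEquiv.norm_map] at h
      have : ‖(ContinuousLinearMap.adjoint (K m)) (V k m)‖ ^ 2 ≤ η * ‖V k m‖ ^ 2 := by
        calc _ ≤ (‖K m‖ * ‖V k m‖) ^ 2 := by gcongr
          _ = ‖K m‖ ^ 2 * ‖V k m‖ ^ 2 := by ring
          _ ≤ _ := by gcongr; exact hη m
      simp only [he]
      linarith
    refine le_trans ?_ hA2
    have h1 : 0 ≤ ∑ m, ω m * ‖A k m - t k • (x (k+1) - xstar)‖ ^ 2 :=
      Finset.sum_nonneg fun m _ => mul_nonneg (hω m).le (by positivity)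
    have h2 : ∑ m, ω m * ‖A k m - t k • (x (k+1) - xstar)‖ ^ 2 = ∑ m, ω m * ‖A k m‖ ^ 2
        - 2 * t k * ⟪∑ m, ω m • A k m, x (k+1) - xstar⟫ + t k ^ 2 * ‖x (k+1) - xstar‖ ^ 2 := by
      have : ∀ m, ω m * ‖A k m - t k • (x (k+1) - xstar)‖ ^ 2 = ω m * ‖A k m‖ ^ 2
          - 2 * t k * (ω m * ⟪A k m, x (k+1) - xstar⟫)
          + ω m * (t k ^ 2 * ‖x (k+1) - xstar‖ ^ 2) := by
        intro m
        rw [norm_sub_sq_real, inner_smul_right, norm_smul, mul_pow, Real.norm_eq_abs, sq_abs]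
        ring
      simp only [this]
      rw [Finset.sum_add_distrib, Finset.sum_sub_distrib, ← Finset.sum_mul, hωsum, one_mul,
        ← Finset.mul_sum, sum_inner]
      simp only [inner_smul_left, conj_trivial]
    have h3 := mul_le_mul_of_nonneg_left (hprim k) (mul_nonneg two_pos.le (htpos k).le)
    have h4 : 0 ≤ t k * μR * ‖x (k+1) - xstar‖ ^ 2 := by
      have := htpos k
      positivity
    nlinarith
  set ρ := 1 + (μR + 2 * a₀) / t 1 with hρ
  have hρ1 : 0 < ρ := by have := htpos 1; positivity
  have hratio : ∀ k, 1 ≤ k → t (k+1) ≤ ρ * t k := by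
    intro k hk
    have h1 := (htall k hk).2.2
    have h2 : μR + 2 * a₀ ≤ (μR + 2 * a₀) / t 1 * t k := by
      rw [div_mul_eq_mul_div, le_div_iff₀ (htpos 1)]
      exact mul_le_mul_of_nonneg_left (htlow k hk) (by positivity)
    rw [hρ]
    linarith
  have hfin : ∀ k, 1 ≤ k → t (k+1) ^ 2 * ‖x (k+1) - xstar‖ ^ 2 ≤ ρ ^ 2 * B := by
    intro k hk
    have h0 := htpos (k+1)
    calc _ ≤ (ρ * t k) ^ 2 * ‖x (k+1) - xstar‖ ^ 2 := by gcongr; exact hratio k hk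
      _ = ρ ^ 2 * (t k ^ 2 * ‖x (k+1) - xstar‖ ^ 2) := by ring
      _ ≤ _ := by gcongr; exact hxB k
  have hbpos : 0 < ρ ^ 2 * B := by positivity
  refine ⟨ρ ^ 2 * B, hbpos, ?_, ρ ^ 2 * B / c ^ 2, by positivity, ?_⟩
  · intro k hk
    have hg := hγpos (k+1)
    have h1 := hfin k hk
    have h2 := (htall k hk).1
    have h3 : γ (k+1) * μF * κ < 1 := by
      have h4 := mul_lt_mul_of_pos_left h2 hg
      rw [show γ (k+1) * t (k+1) = 1 from mul_inv_cancel₀ hg.ne'] at h4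
      have : 0 ≤ γ (k+1) * a₀ := by positivity
      have e1 : γ (k+1) * μF * κ = γ (k+1) * a₀ := by rw [ha₀]; ring
      rw [e1]; linarith
    have h5 : ‖x (k+1) - xstar‖ ^ 2 ≤ γ (k+1) ^ 2 * (ρ ^ 2 * B) := by
      have e1 : γ (k+1) ^ 2 * (t (k+1) ^ 2 * ‖x (k+1) - xstar‖ ^ 2) = ‖x (k+1) - xstar‖ ^ 2 := by
        simp only [htdef]; field_simp
      rw [← e1]
      gcongr
    refine h5.trans ?_
    apply mul_le_mul_of_nonneg_right _ hbpos.le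
    apply le_div_self (by positivity) (by linarith)
    have : 0 ≤ γ (k+1) * μF * κ := by positivity
    linarith
  · intro k hk
    have h1 := hfin k hk
    have h2 := htlin (k+1) (by omega)
    push_cast at h2
    rw [div_div, le_div_iff₀ (by positivity)]
    refine le_trans ?_ h1
    rw [← mul_pow, mul_comm]
    gcongr
end
end

section
/- Theorem 11 (convergence of the Distributed Condat–Vũ algorithm, Form I): Suppose the parameters γ > 0 and σ > 0 satisfy γ·(σ·‖Σ_{m=1}^M ω_m·K_m*∘K_m‖ + L/2) < 1, where L satisfies the averaged smoothness condition (1/M²)·Σ_m (1/ω_m)·‖∇F_m(x) − ∇F_m(x')‖² ≤ L²·‖x − x'‖² for all x, x' ∈ 𝒳. Then the iterate x^k of the Distributed Condat–Vũ algorithm converges to a minimizer x̄ of Ψ, and each u_m^k converges to some u_m* ∈ 𝒰_m. -/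
open Filter Topology RealInnerProductSpace

noncomputable section

section CVHelpers

variable {E : Type*} [NormedAddCommGroup E] [InnerProductSpace ℝ E]

lemma cv_line_deriv [CompleteSpace E] {f : E → ℝ} {g : E → E} (hg : ∀ z, HasGradientAt f (g z) z) (x d : E) (t : ℝ) :
    HasDerivAt (fun t : ℝ => f (x + t • d)) ⟪g (x + t • d), d⟫ t := by
  have h1 : HasDerivAt (fun t : ℝ => x + t • d) d t := by
    simpa using ((hasDerivAt_id t).smul_const d).const_add x
  have h2 := (hg (x + t • d)).hasFDerivAt.comp_hasDerivAt t h1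
  simp only [InnerProductSpace.toDual_apply_apply] at h2
  exact h2

/-- A prox point of a convex function satisfies the subgradient inequality. -/
lemma cv_prox_subgrad {σ : ℝ} {G : E → ℝ} (hG : ConvexOn ℝ Set.univ G) (hσ : 0 < σ) {z p : E}
    (h : IsProxPt σ G z p) (y : E) : σ * G p + ⟪z - p, y - p⟫ ≤ σ * G y := by
  have key : ∀ t : ℝ, 0 < t → t ≤ 1 →
      0 ≤ σ * (G y - G p) - ⟪z - p, y - p⟫ + t * (‖y - p‖ ^ 2 / 2) := by
    intro t ht ht1
    have h1 := h (p + t • (y - p))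
    have h2 : G (p + t • (y - p)) ≤ (1 - t) * G p + t * G y := by
      have := hG.2 (Set.mem_univ p) (Set.mem_univ y) (by linarith : 0 ≤ 1 - t) ht.le (by ring)
      have e : (1 - t) • p + t • y = p + t • (y - p) := by module
      rw [e] at this
      simpa using this
    have h3 : ‖p + t • (y - p) - z‖ ^ 2
        = ‖p - z‖ ^ 2 - 2 * t * ⟪z - p, y - p⟫ + t ^ 2 * ‖y - p‖ ^ 2 := by
      have e : p + t • (y - p) - z = (p - z) + t • (y - p) := by module
      rw [e, norm_add_sq_real, inner_smul_right, norm_smul, mul_pow, Real.norm_eq_abs, sq_abs,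
        ← neg_sub z p, inner_neg_left, norm_neg]
      ring
    rw [h3] at h1
    have h4 := mul_le_mul_of_nonneg_left h2 hσ.le
    have h5 : 0 ≤ t * (σ * (G y - G p) - ⟪z - p, y - p⟫ + t * (‖y - p‖ ^ 2 / 2)) := by
      nlinarith
    exact nonneg_of_mul_nonneg_right h5 ht
  have lim : Tendsto (fun t : ℝ => σ * (G y - G p) - ⟪z - p, y - p⟫ + t * (‖y - p‖ ^ 2 / 2))
      (𝓝[>] 0) (𝓝 (σ * (G y - G p) - ⟪z - p, y - p⟫ + 0 * (‖y - p‖ ^ 2 / 2))) := by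
    apply Tendsto.mono_left _ nhdsWithin_le_nhds
    apply Continuous.tendsto
    fun_prop
  have := ge_of_tendsto lim (b := 0) (by
    filter_upwards [Ioc_mem_nhdsGT (zero_lt_one' ℝ)] with t ht using key t ht.1 ht.2)
  linarith

lemma cv_grad_subgrad {f : E → ℝ} {g : E → E} (hf : ConvexOn ℝ Set.univ f)
    (hg : ∀ x d t, HasDerivAt (fun t : ℝ => f (x + t • d)) ⟪g (x + t • d), d⟫ t) (x y : E) :
    f x + ⟪g x, y - x⟫ ≤ f y := by
  have hc : ConvexOn ℝ Set.univ (fun t : ℝ => f (x + t • (y - x))) := by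
    refine ⟨convex_univ, fun s _ t _ a b ha hb hab => ?_⟩
    have := hf.2 (Set.mem_univ (x + s • (y - x))) (Set.mem_univ (x + t • (y - x))) ha hb hab
    have e : a • (x + s • (y - x)) + b • (x + t • (y - x)) = x + (a • s + b • t) • (y - x) := by
      obtain rfl : a = 1 - b := by linarith
      simp only [smul_eq_mul]
      module
    rwa [e] at this
  have := hc.le_slope_of_hasDerivAt (Set.mem_univ 0) (Set.mem_univ 1) zero_lt_one
    (hg x (y - x) 0)
  simp [slope] at this
  linarith

lemma cv_descent {f : E → ℝ} {g : E → E} {L : ℝ}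
    (hg : ∀ x d t, HasDerivAt (fun t : ℝ => f (x + t • d)) ⟪g (x + t • d), d⟫ t)
    (hL : ∀ x y, ‖g x - g y‖ ≤ L * ‖x - y‖) (x d : E) :
    f (x + d) ≤ f x + ⟪g x, d⟫ + L / 2 * ‖d‖ ^ 2 := by
  set h : ℝ → ℝ := fun t => f (x + t • d) - t * ⟪g x, d⟫ - t ^ 2 * (L / 2 * ‖d‖ ^ 2) with hh
  have hd : ∀ t, HasDerivAt h (⟪g (x + t • d), d⟫ - 1 * ⟪g x, d⟫
      - (2 * t) * (L / 2 * ‖d‖ ^ 2)) t := by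
    intro t
    have h3 : HasDerivAt (fun t : ℝ => t ^ 2) (2 * t) t := by simpa using hasDerivAt_pow 2 t
    exact ((hg x d t).sub ((hasDerivAt_id t).mul_const _)).sub (h3.mul_const _)
  have ha : AntitoneOn h (Set.Icc 0 1) := by
    apply antitoneOn_of_deriv_nonpos (convex_Icc 0 1)
    · exact fun t _ => (hd t).continuousAt.continuousWithinAt
    · exact fun t _ => (hd t).differentiableAt.differentiableWithinAt
    · intro t ht
      rw [interior_Icc] at ht
      rw [(hd t).deriv]
      have h1 : ⟪g (x + t • d) - g x, d⟫ ≤ L * (t * ‖d‖) * ‖d‖ := by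
        refine (real_inner_le_norm _ _).trans ?_
        gcongr
        have := hL (x + t • d) x
        rwa [add_sub_cancel_left, norm_smul, Real.norm_eq_abs, abs_of_pos ht.1] at this
      rw [inner_sub_left] at h1
      nlinarith
  have := ha (Set.left_mem_Icc.2 zero_le_one) (Set.right_mem_Icc.2 zero_le_one) zero_le_one
  simp [hh] at this
  linarith

/-- Baillon–Haddad. -/
lemma cv_coco {f : E → ℝ} {g : E → E} {L : ℝ} (hL0 : 0 < L) (hf : ConvexOn ℝ Set.univ f)
    (hg : ∀ x d t, HasDerivAt (fun t : ℝ => f (x + t • d)) ⟪g (x + t • d), d⟫ t)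
    (hL : ∀ x y, ‖g x - g y‖ ≤ L * ‖x - y‖) (x y : E) :
    1 / L * ‖g x - g y‖ ^ 2 ≤ ⟪g x - g y, x - y⟫ := by
  have half : ∀ x y, f x + ⟪g x, y - x⟫ + 1 / (2 * L) * ‖g y - g x‖ ^ 2 ≤ f y := by
    intro x y
    have h1 := cv_descent hg hL y (-(1 / L) • (g y - g x))
    have h2 := cv_grad_subgrad hf hg x (y + -(1 / L) • (g y - g x))
    have e : y + -(1 / L) • (g y - g x) - x = (y - x) + -(1 / L) • (g y - g x) := by module
    rw [e, inner_add_right, inner_smul_right] at h2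
    rw [inner_smul_right, norm_smul, mul_pow, Real.norm_eq_abs, sq_abs] at h1
    have h3 : ⟪g y, g y - g x⟫ - ⟪g x, g y - g x⟫ = ‖g y - g x‖ ^ 2 := by
      rw [← inner_sub_left, real_inner_self_eq_norm_sq]
    have h4 : 1 / (2 * L) * ‖g y - g x‖ ^ 2
        = 1 / L * (⟪g y, g y - g x⟫ - ⟪g x, g y - g x⟫)
          - L / 2 * ((-(1 / L)) ^ 2 * ‖g y - g x‖ ^ 2) := by
      rw [h3]; field_simp; ring
    rw [h4]
    linarith
  have h1 := half x y
  have h2 := half y x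
  rw [norm_sub_rev] at h1
  have e1 : ⟪g x - g y, x - y⟫ = -⟪g x, y - x⟫ - ⟪g y, x - y⟫ := by
    rw [inner_sub_left, ← neg_sub y x, inner_neg_right, inner_neg_right]
  have e2 : 1 / L * ‖g x - g y‖ ^ 2
    = 1 / (2 * L) * ‖g x - g y‖ ^ 2 + 1 / (2 * L) * ‖g x - g y‖ ^ 2 := by field_simp; ring
  rw [e1, e2]; linarith

lemma cv_coco_three {f : E → ℝ} {g : E → E} {L : ℝ} (hL0 : 0 < L) (hf : ConvexOn ℝ Set.univ f)
    (hg : ∀ x d t, HasDerivAt (fun t : ℝ => f (x + t • d)) ⟪g (x + t • d), d⟫ t)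
    (hL : ∀ x y, ‖g x - g y‖ ≤ L * ‖x - y‖) (x x' y : E) :
    -(L / 4 * ‖x' - x‖ ^ 2) ≤ ⟪g x - g y, x' - y⟫ := by
  have h1 := cv_coco hL0 hf hg hL x y
  have e : x' - y = (x - y) + (x' - x) := by abel
  rw [e, inner_add_right]
  have h2 : 0 ≤ 1 / L * ‖(g x - g y) + (L / 2) • (x' - x)‖ ^ 2 := by positivity
  rw [norm_add_sq_real, inner_smul_right, norm_smul, mul_pow, Real.norm_eq_abs, sq_abs] at h2
  have h3 : 1 / L * (‖g x - g y‖ ^ 2 + 2 * (L / 2 * ⟪g x - g y, x' - x⟫)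
      + (L / 2) ^ 2 * ‖x' - x‖ ^ 2) = 1 / L * ‖g x - g y‖ ^ 2 + ⟪g x - g y, x' - x⟫
      + L / 4 * ‖x' - x‖ ^ 2 := by field_simp; ring
  rw [h3] at h2
  linarith

/-- Opial-type convergence argument. -/
lemma cv_fejer {Z : Type*} [NormedAddCommGroup Z] [ProperSpace Z] (P : Z → ℝ) (hPc : Continuous P)
    (hP0 : P 0 = 0) {c : ℝ} (hc : 0 < c) (hP : ∀ z, c * ‖z‖ ^ 2 ≤ P z) (S : Set Z)
    (hS : S.Nonempty) (z : ℕ → Z)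
    (hdec : ∀ s ∈ S, ∀ k, P (z (k + 1) - s) + c * ‖z (k + 1) - z k‖ ^ 2 ≤ P (z k - s))
    (hclosed : ∀ (zb : Z) (φ : ℕ → ℕ), Tendsto (fun n => z (φ n)) atTop (𝓝 zb) →
      Tendsto (fun n => z (φ n + 1)) atTop (𝓝 zb) → zb ∈ S) :
    ∃ zb ∈ S, Tendsto z atTop (𝓝 zb) := by
  have hanti : ∀ s ∈ S, Antitone (fun k => P (z k - s)) := fun s hs =>
    antitone_nat_of_succ_le fun k => by
      have := hdec s hs k
      have : 0 ≤ c * ‖z (k + 1) - z k‖ ^ 2 := by positivity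
      linarith
  have hPnn : ∀ w, 0 ≤ P w := fun w => le_trans (by positivity) (hP w)
  have toz : ∀ w : ℕ → Z, Tendsto (fun k => c * ‖w k‖ ^ 2) atTop (𝓝 0) →
      Tendsto w atTop (𝓝 0) := by
    intro w hw
    rw [tendsto_zero_iff_norm_tendsto_zero]
    have h1 := (hw.const_mul (1 / c)).sqrt
    simpa [← mul_assoc, inv_mul_cancel₀ hc.ne'] using h1
  obtain ⟨s, hs⟩ := hS
  have hconv := tendsto_atTop_ciInf (hanti s hs) ⟨0, by rintro _ ⟨k, rfl⟩; exact hPnn _⟩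
  have hdiff : Tendsto (fun k => z (k + 1) - z k) atTop (𝓝 0) := by
    apply toz
    have h1 := hconv.sub ((tendsto_add_atTop_iff_nat 1).2 hconv)
    rw [sub_self] at h1
    refine squeeze_zero (fun k => by positivity) (fun k => ?_) h1
    have := hdec s hs k
    linarith
  have hb : ∀ k, z k ∈ Metric.closedBall s (Real.sqrt (P (z 0 - s) / c)) := by
    intro k
    rw [Metric.mem_closedBall, dist_eq_norm]
    apply Real.le_sqrt_of_sq_le
    rw [le_div_iff₀ hc, mul_comm]
    exact (hP _).trans (hanti s hs (Nat.zero_le k))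
  obtain ⟨zb, -, φ, hφ, hlim⟩ := tendsto_subseq_of_bounded Metric.isBounded_closedBall hb
  have hlim' : Tendsto (fun n => z (φ n)) atTop (𝓝 zb) := hlim
  have hzb : zb ∈ S := by
    refine hclosed zb φ hlim' ?_
    have := (hdiff.comp hφ.tendsto_atTop).add hlim'
    simpa using this
  refine ⟨zb, hzb, ?_⟩
  have hconv2 := tendsto_atTop_ciInf (hanti zb hzb) ⟨0, by rintro _ ⟨k, rfl⟩; exact hPnn _⟩
  have h0 : Tendsto (fun n => P (z (φ n) - zb)) atTop (𝓝 0) := by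
    have := (hPc.tendsto _).comp (hlim'.sub_const zb)
    rw [sub_self, hP0] at this
    exact this
  have h0' := tendsto_nhds_unique (hconv2.comp hφ.tendsto_atTop) h0
  rw [h0'] at hconv2
  have : Tendsto (fun k => z k - zb) atTop (𝓝 0) :=
    toz _ (squeeze_zero (fun k => by positivity) (fun k => hP _) hconv2)
  simpa using this.add_const zb

lemma cv_subgrad_mono {G : E → ℝ} {p q a b : E} (h1 : IsSubgradientAt G p a)
    (h2 : IsSubgradientAt G q b) : 0 ≤ ⟪a - b, p - q⟫ := by
  have h1 := h1 q
  have h2 := h2 p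
  rw [← neg_sub p q, inner_neg_right] at h1
  rw [inner_sub_left]
  linarith

lemma cv_dual_alg {s : ℝ} (hs : 0 < s) (A B X' X : E)
    (h : 0 ≤ ⟪A, (1 / s) • (B - A) + (2 : ℝ) • X' - X⟫) :
    (1 / s) * (‖A‖ ^ 2 + ‖A - B‖ ^ 2 - ‖B‖ ^ 2)
      - 2 * (⟪A, X'⟫ + ⟪A - B, X' - X⟫ - ⟪B, X⟫) ≤ 2 * ⟪B, X'⟫ := by
  rw [inner_sub_right, inner_add_right, inner_smul_right, inner_smul_right, inner_sub_right,
    real_inner_self_eq_norm_sq] at h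
  have e := norm_sub_sq_real A B
  have e2 : ⟪A - B, X' - X⟫ = ⟪A, X'⟫ - ⟪A, X⟫ - ⟪B, X'⟫ + ⟪B, X⟫ := by
    rw [inner_sub_left, inner_sub_right, inner_sub_right]; ring
  rw [e, e2]
  linarith

lemma cv_dual_step {X : Type*} [NormedAddCommGroup X] [InnerProductSpace ℝ X] (K : X →L[ℝ] E)
    {G : E → ℝ} {s : ℝ} (hs : 0 < s) {p u u' h : E} {x x' y : X}
    (hp : IsSubgradientAt G p u') (hh : IsSubgradientAt G (K y) h)
    (e : u' = (u + s • K ((2 : ℝ) • x' - x)) - s • p) :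
    (1 / s) * (‖u' - h‖ ^ 2 + ‖u' - u‖ ^ 2 - ‖u - h‖ ^ 2)
      - 2 * (⟪u' - h, K (x' - y)⟫ + ⟪u' - u, K (x' - x)⟫ - ⟪u - h, K (x - y)⟫)
      ≤ 2 * ⟪u - h, K (x' - y)⟫ := by
  have h1 := cv_subgrad_mono hp hh
  have h2 := cv_dual_alg hs (u' - h) (u - h) (K (x' - y)) (K (x - y)) (by
    convert h1 using 2
    have hp' : p = (1 / s) • (u - u') + K ((2 : ℝ) • x' - x) := by
      have : s • p = s • ((1 / s) • (u - u') + K ((2 : ℝ) • x' - x)) := by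
        rw [smul_add, smul_smul, mul_one_div_cancel hs.ne', one_smul, e]
        abel
      exact smul_right_injective E hs.ne' this
    rw [hp']
    simp only [map_sub, map_smul]
    module)
  have e1 : u' - h - (u - h) = u' - u := by abel
  have e2 : K (x' - y) - K (x - y) = K (x' - x) := by rw [← map_sub]; congr 1; abel
  rwa [e1, e2] at h2

end CVHelpers

/-- The Lyapunov (preconditioned) quadratic form. -/
def cvP {X : Type*} [NormedAddCommGroup X] [InnerProductSpace ℝ X] {M : ℕ}
    {U : Fin M → Type*} [∀ m, NormedAddCommGroup (U m)] [∀ m, InnerProductSpace ℝ (U m)]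
    (K : ∀ m : Fin M, X →L[ℝ] U m) (γ σ : ℝ) (ω : Fin M → ℝ) (z : X × (∀ m, U m)) : ℝ :=
  1 / γ * ‖z.1‖ ^ 2 + 1 / (M : ℝ) * ∑ m, (1 / ((M : ℝ) * ω m * σ) * ‖z.2 m‖ ^ 2
    - 2 * ⟪z.2 m, K m z.1⟫)

section CVMain

variable {X : Type*} [NormedAddCommGroup X] [InnerProductSpace ℝ X] [FiniteDimensional ℝ X]
    {M : ℕ} {U : Fin M → Type*} [∀ m, NormedAddCommGroup (U m)] [∀ m, InnerProductSpace ℝ (U m)]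
    [∀ m, FiniteDimensional ℝ (U m)]

lemma cvP_coercive (hM : 1 ≤ M) (K : ∀ m : Fin M, X →L[ℝ] U m) {γ σ L : ℝ} {ω : Fin M → ℝ}
    (hω : ∀ m, 0 < ω m) (hωsum : ∑ m, ω m = 1) (hL : 0 < L) (hγ0 : 0 < γ) (hσ0 : 0 < σ)
    (hparam : γ * (σ *
        ‖∑ m, ω m • ((ContinuousLinearMap.adjoint (K m)).comp (K m))‖ + L / 2) < 1) :
    ∃ c > 0, ∀ z : X × (∀ m, U m), c * ‖z‖ ^ 2 + L / 2 * ‖z.1‖ ^ 2 ≤ cvP K γ σ ω z := by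
  set N := ‖∑ m, ω m • ((ContinuousLinearMap.adjoint (K m)).comp (K m))‖ with hN
  have hN0 : 0 ≤ N := norm_nonneg _
  have hM0 : (0 : ℝ) < M := by exact_mod_cast hM
  obtain ⟨A, hA⟩ : ∃ A, A = 1 / γ - L / 2 := ⟨_, rfl⟩
  obtain ⟨B, hB⟩ : ∃ B, B = σ * N := ⟨_, rfl⟩
  have hB0 : 0 ≤ B := by rw [hB]; positivity
  have hBA : B < A := by
    rw [mul_comm, ← lt_div_iff₀ hγ0] at hparam
    rw [hA, hB]; linarith
  have hA0 : 0 < A := by linarith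
  obtain ⟨θ, hθ⟩ : ∃ θ, θ = (A + B) / (2 * A) := ⟨_, rfl⟩
  have hθ0 : 0 < θ := by rw [hθ]; positivity
  have hθ1 : θ < 1 := by rw [hθ, div_lt_one (by positivity)]; linarith
  have hBθ : 0 < A - B / θ := by
    rw [sub_pos, div_lt_iff₀ hθ0, hθ]
    have : A * ((A + B) / (2 * A)) = (A + B) / 2 := by field_simp
    rw [this]; linarith
  have hω1 : ∀ m, ω m ≤ 1 := fun m => by
    rw [← hωsum]
    exact Finset.single_le_sum (fun i _ => (hω i).le) (Finset.mem_univ m)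
  have hop : ∀ x : X, ∑ m, ω m * ‖K m x‖ ^ 2 ≤ N * ‖x‖ ^ 2 := by
    intro x
    have h1 : ⟪(∑ m, ω m • ((ContinuousLinearMap.adjoint (K m)).comp (K m))) x, x⟫
        = ∑ m, ω m * ‖K m x‖ ^ 2 := by
      rw [ContinuousLinearMap.sum_apply, sum_inner]
      refine Finset.sum_congr rfl fun m _ => ?_
      rw [ContinuousLinearMap.smul_apply, real_inner_smul_left, ContinuousLinearMap.comp_apply,
        ContinuousLinearMap.adjoint_inner_left, real_inner_self_eq_norm_sq]
    rw [← h1]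
    refine (real_inner_le_norm _ _).trans ?_
    have := ContinuousLinearMap.le_opNorm
      (∑ m, ω m • ((ContinuousLinearMap.adjoint (K m)).comp (K m))) x
    calc _ ≤ N * ‖x‖ * ‖x‖ := by gcongr
      _ = _ := by ring
  obtain ⟨d, hd⟩ : ∃ d, d = (1 - θ) / ((M : ℝ) * (M * σ)) := ⟨_, rfl⟩
  have hd0 : 0 < d := by
    rw [hd]; have : 0 < 1 - θ := by linarith
    positivity
  refine ⟨min (A - B / θ) d, lt_min hBθ hd0, fun z => ?_⟩
  have hterm : ∀ m, (1 - θ) / (M * σ) * ‖z.2 m‖ ^ 2 - (M * σ / θ) * (ω m * ‖K m z.1‖ ^ 2)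
      ≤ 1 / ((M : ℝ) * ω m * σ) * ‖z.2 m‖ ^ 2 - 2 * ⟪z.2 m, K m z.1⟫ := by
    intro m
    have hs : 0 < (M : ℝ) * ω m * σ := by have := hω m; positivity
    obtain ⟨s, hs'⟩ : ∃ s, s = (M : ℝ) * ω m * σ := ⟨_, rfl⟩
    rw [← hs'] at hs ⊢
    have h1 : 2 * ⟪z.2 m, K m z.1⟫ ≤ θ / s * ‖z.2 m‖ ^ 2 + s / θ * ‖K m z.1‖ ^ 2 := by
      have h2 : 0 ≤ θ / s * ‖z.2 m - (s / θ) • K m z.1‖ ^ 2 := by positivity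
      rw [norm_sub_sq_real, inner_smul_right, norm_smul, mul_pow, Real.norm_eq_abs, sq_abs] at h2
      have h3 : θ / s * (‖z.2 m‖ ^ 2 - 2 * (s / θ * ⟪z.2 m, K m z.1⟫)
          + (s / θ) ^ 2 * ‖K m z.1‖ ^ 2) = θ / s * ‖z.2 m‖ ^ 2 - 2 * ⟪z.2 m, K m z.1⟫
          + s / θ * ‖K m z.1‖ ^ 2 := by field_simp
      linarith
    have h4 : (1 - θ) / (M * σ) * ‖z.2 m‖ ^ 2 ≤ (1 - θ) / s * ‖z.2 m‖ ^ 2 := by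
      have : 0 ≤ 1 - θ := by linarith
      have : s ≤ M * σ := by
        rw [hs', mul_right_comm]
        exact mul_le_of_le_one_right (by positivity) (hω1 m)
      gcongr
    have h5 : (M * σ / θ) * (ω m * ‖K m z.1‖ ^ 2) = s / θ * ‖K m z.1‖ ^ 2 := by
      rw [hs']; ring
    have h6 : (1 - θ) / s * ‖z.2 m‖ ^ 2 = 1 / s * ‖z.2 m‖ ^ 2 - θ / s * ‖z.2 m‖ ^ 2 := by ring
    linarith
  have hsum := Finset.sum_le_sum (fun m (_ : m ∈ Finset.univ) => hterm m)
  rw [Finset.sum_sub_distrib, ← Finset.mul_sum, ← Finset.mul_sum] at hsum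
  have hsum' := mul_le_mul_of_nonneg_left hsum (by positivity : 0 ≤ 1 / (M : ℝ))
  have hK : 1 / (M : ℝ) * (M * σ / θ * ∑ m, ω m * ‖K m z.1‖ ^ 2) ≤ B / θ * ‖z.1‖ ^ 2 := by
    calc _ = σ / θ * ∑ m, ω m * ‖K m z.1‖ ^ 2 := by field_simp
      _ ≤ σ / θ * (N * ‖z.1‖ ^ 2) := by gcongr; exact hop _
      _ = _ := by rw [hB]; ring
  have hnorm : ‖z‖ ^ 2 ≤ ‖z.1‖ ^ 2 + ∑ m, ‖z.2 m‖ ^ 2 := by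
    have h0 : 0 ≤ ∑ m, ‖z.2 m‖ ^ 2 := Finset.sum_nonneg fun _ _ => by positivity
    have h2 : ‖z.2‖ ≤ √(∑ m, ‖z.2 m‖ ^ 2) := by
      rw [pi_norm_le_iff_of_nonneg (Real.sqrt_nonneg _)]
      intro m
      apply Real.le_sqrt_of_sq_le
      exact Finset.single_le_sum (f := fun m => ‖z.2 m‖ ^ 2) (fun i _ => by positivity)
        (Finset.mem_univ m)
    have h3 : ‖z.2‖ ^ 2 ≤ ∑ m, ‖z.2 m‖ ^ 2 := by
      rw [← Real.sq_sqrt h0]; gcongr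
    rw [Prod.norm_def]
    rcases max_choice ‖z.1‖ ‖z.2‖ with h | h <;> rw [h]
    · linarith
    · have := sq_nonneg ‖z.1‖
      linarith
  have hS0 : 0 ≤ ∑ m, ‖z.2 m‖ ^ 2 := Finset.sum_nonneg fun _ _ => by positivity
  have hc : min (A - B / θ) d * ‖z‖ ^ 2
      ≤ (A - B / θ) * ‖z.1‖ ^ 2 + d * ∑ m, ‖z.2 m‖ ^ 2 := by
    have hm0 : 0 ≤ min (A - B / θ) d := (lt_min hBθ hd0).le
    calc _ ≤ min (A - B / θ) d * (‖z.1‖ ^ 2 + ∑ m, ‖z.2 m‖ ^ 2) := by gcongr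
      _ = min (A - B / θ) d * ‖z.1‖ ^ 2 + min (A - B / θ) d * ∑ m, ‖z.2 m‖ ^ 2 := by ring
      _ ≤ _ := by
        gcongr
        · exact min_le_left _ _
        · exact min_le_right _ _
  have hdS : d * ∑ m, ‖z.2 m‖ ^ 2
      = 1 / (M : ℝ) * ((1 - θ) / (M * σ) * ∑ m, ‖z.2 m‖ ^ 2) := by
    rw [hd]; field_simp
  have hAx : A * ‖z.1‖ ^ 2 = 1 / γ * ‖z.1‖ ^ 2 - L / 2 * ‖z.1‖ ^ 2 := by rw [hA]; ring
  unfold cvP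
  rw [mul_sub] at hsum'
  linarith

lemma cvP_step (hM : 1 ≤ M) (K : ∀ m : Fin M, X →L[ℝ] U m) {γ σ L : ℝ} {ω : Fin M → ℝ}
    (hω : ∀ m, 0 < ω m) (hγ0 : 0 < γ) (hσ0 : 0 < σ)
    {R : X → ℝ} {H : ∀ m, U m → ℝ} {g : X → X}
    (hco : ∀ x x' y, -(L / 4 * ‖x' - x‖ ^ 2) ≤ ⟪g x - g y, x' - y⟫)
    {x x' y : X} {u u' h p : ∀ m, U m}
    (hR : IsSubgradientAt R x' ((1 / γ) • (x - x') - g x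
      - (1 / (M : ℝ)) • ∑ m, (ContinuousLinearMap.adjoint (K m)) (u m)))
    (hRy : IsSubgradientAt R y (- g y
      - (1 / (M : ℝ)) • ∑ m, (ContinuousLinearMap.adjoint (K m)) (h m)))
    (hp : ∀ m, IsSubgradientAt (H m) (p m) (u' m))
    (hh : ∀ m, IsSubgradientAt (H m) (K m y) (h m))
    (e : ∀ m, u' m = (u m + ((M : ℝ) * ω m * σ) • K m ((2 : ℝ) • x' - x))
      - ((M : ℝ) * ω m * σ) • p m) :
    cvP K γ σ ω ((x', u') - (y, h)) + (cvP K γ σ ω ((x', u') - (x, u)) - L / 2 * ‖x' - x‖ ^ 2)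
      ≤ cvP K γ σ ω ((x, u) - (y, h)) := by
  have hM0 : (0 : ℝ) < M := by exact_mod_cast hM
  have hd := Finset.sum_le_sum (fun m (_ : m ∈ Finset.univ) =>
    cv_dual_step (K m) (by have := hω m; positivity : 0 < (M : ℝ) * ω m * σ) (hp m) (hh m) (e m))
  have hd' := mul_le_mul_of_nonneg_left hd (by positivity : 0 ≤ 1 / (M : ℝ))
  have hx := cv_subgrad_mono hR hRy
  have e1 : ((1 / γ) • (x - x') - g x
      - (1 / (M : ℝ)) • ∑ m, (ContinuousLinearMap.adjoint (K m)) (u m)) - (- g y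
      - (1 / (M : ℝ)) • ∑ m, (ContinuousLinearMap.adjoint (K m)) (h m))
      = (1 / γ) • (x - x') - (g x - g y)
        - (1 / (M : ℝ)) • ∑ m, (ContinuousLinearMap.adjoint (K m)) (u m - h m) := by
    simp only [map_sub, Finset.sum_sub_distrib, smul_sub]
    abel
  have e2 : ⟪∑ m, (ContinuousLinearMap.adjoint (K m)) (u m - h m), x' - y⟫
      = ∑ m, ⟪u m - h m, K m (x' - y)⟫ := by
    rw [sum_inner]
    exact Finset.sum_congr rfl fun m _ => ContinuousLinearMap.adjoint_inner_left _ _ _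
  rw [e1, inner_sub_left, inner_sub_left, real_inner_smul_left, real_inner_smul_left, e2] at hx
  have e3 : ‖x - y‖ ^ 2 = ‖x' - y‖ ^ 2 + 2 * ⟪x - x', x' - y⟫ + ‖x' - x‖ ^ 2 := by
    have : x - y = (x' - y) + (x - x') := by abel
    rw [this, norm_add_sq_real, real_inner_comm, norm_sub_rev x x']
  have hc := hco x x' y
  have e3' : 1 / γ * ‖x - y‖ ^ 2 = 1 / γ * ‖x' - y‖ ^ 2 + 2 * (1 / γ * ⟪x - x', x' - y⟫)
      + 1 / γ * ‖x' - x‖ ^ 2 := by rw [e3]; ring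
  unfold cvP
  simp only [Prod.fst_sub, Prod.snd_sub, Pi.sub_apply]
  simp only [mul_sub, mul_add, Finset.sum_sub_distrib, Finset.sum_add_distrib,
    ← Finset.mul_sum] at hd' ⊢
  linarith

end CVMain

/-- Theorem 11: convergence of the Distributed Condat–Vũ algorithm (Form I). -/
theorem distributed_condat_vu_convergence
    {𝒳 : Type*}
    [NormedAddCommGroup 𝒳] [InnerProductSpace ℝ 𝒳] [FiniteDimensional ℝ 𝒳]
    {M : ℕ} (hM : 1 ≤ M)
    {𝒰 : Fin M → Type*}
    [∀ m, NormedAddCommGroup (𝒰 m)] [∀ m, InnerProductSpace ℝ (𝒰 m)]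
    [∀ m, FiniteDimensional ℝ (𝒰 m)]
    (K : ∀ m : Fin M, 𝒳 →L[ℝ] 𝒰 m)
    (R : 𝒳 → ℝ) (F : Fin M → 𝒳 → ℝ) (H : ∀ m : Fin M, 𝒰 m → ℝ)
    (F' : Fin M → 𝒳 → 𝒳)
    (hRconv : ConvexOn ℝ Set.univ R)
    (hFconv : ∀ m, ConvexOn ℝ Set.univ (F m))
    (hHconv : ∀ m, ConvexOn ℝ Set.univ (H m))
    (hFgrad : ∀ m z, HasGradientAt (F m) (F' m z) z)
    (hFlipschitz : ∀ m, ∃ Lm : ℝ, 0 < Lm ∧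
      ∀ z z', ‖F' m z - F' m z'‖ ≤ Lm * ‖z - z'‖)
    -- weights
    (ω : Fin M → ℝ) (hω : ∀ m, 0 < ω m) (hωsum : ∑ m, ω m = 1)
    -- averaged smoothness constant
    (L : ℝ) (hL : 0 < L)
    (havg : ∀ z z' : 𝒳,
      (1 / (M : ℝ)^2) * ∑ m, (1 / ω m) * ‖F' m z - F' m z'‖^2
        ≤ L^2 * ‖z - z'‖^2)
    -- Assumption: existence of a primal-dual solution
    (xstar : 𝒳) (rstar : 𝒳) (hstar : ∀ m : Fin M, 𝒰 m)
    (hrstar : IsSubgradientAt R xstar rstar)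
    (hhstar : ∀ m, IsSubgradientAt (H m) (K m xstar) (hstar m))
    (hopt : rstar + (1 / (M : ℝ)) •
      ∑ m, (F' m xstar + (ContinuousLinearMap.adjoint (K m)) (hstar m)) = 0)
    -- parameters
    (γ σ : ℝ) (hγ0 : 0 < γ) (hσ0 : 0 < σ)
    (hparam : γ * (σ *
        ‖∑ m, ω m • ((ContinuousLinearMap.adjoint (K m)).comp (K m))‖
      + L / 2) < 1)
    -- Distributed Condat–Vũ iterates (Form I)
    (x : ℕ → 𝒳) (a : ℕ → Fin M → 𝒳) (u : ℕ → ∀ m : Fin M, 𝒰 m)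
    (ha0 : ∀ m, a 0 m =
      (ContinuousLinearMap.adjoint (K m)) (u 0 m) + F' m (x 0))
    (hx : ∀ k, IsProxPt γ R (x k - (γ / (M : ℝ)) • ∑ m, a k m) (x (k+1)))
    (hu : ∀ k m, ∃ p : 𝒰 m,
      IsProxPt (1 / ((M : ℝ) * ω m * σ)) (H m)
        ((1 / ((M : ℝ) * ω m * σ)) •
          (u k m + ((M : ℝ) * ω m * σ) • K m ((2:ℝ) • x (k+1) - x k))) p ∧
      u (k+1) m = (u k m + ((M : ℝ) * ω m * σ) • K m ((2:ℝ) • x (k+1) - x k))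
        - ((M : ℝ) * ω m * σ) • p)
    (ha : ∀ k m, a (k+1) m =
      (ContinuousLinearMap.adjoint (K m)) (u (k+1) m) + F' m (x (k+1))) :
    ∃ xbar : 𝒳,
      (∀ y, R xbar + (1 / (M : ℝ)) * ∑ m, (F m xbar + H m (K m xbar))
        ≤ R y + (1 / (M : ℝ)) * ∑ m, (F m y + H m (K m y))) ∧
      Tendsto x atTop (𝓝 xbar) ∧
      (∀ m, ∃ ubar : 𝒰 m, Tendsto (fun k => u k m) atTop (𝓝 ubar)) := by
  classical
  have hM0 : (0 : ℝ) < M := by exact_mod_cast hM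
  have hs0 : ∀ m, 0 < (M : ℝ) * ω m * σ := fun m => by have := hω m; positivity
  obtain ⟨g, hg⟩ : ∃ g : 𝒳 → 𝒳, g = fun z => (1 / (M : ℝ)) • ∑ m, F' m z := ⟨_, rfl⟩
  obtain ⟨f, hf⟩ : ∃ f : 𝒳 → ℝ, f = fun z => (1 / (M : ℝ)) * ∑ m, F m z := ⟨_, rfl⟩
  have hFc : ∀ m, Continuous (F' m) := by
    intro m
    obtain ⟨Lm, hLm, hl⟩ := hFlipschitz m
    have : LipschitzWith ⟨Lm, hLm.le⟩ (F' m) := LipschitzWith.of_dist_le_mul fun z z' => by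
      rw [dist_eq_norm, dist_eq_norm]; exact hl z z'
    exact this.continuous
  have hgc : Continuous g := by
    rw [hg]
    exact (continuous_finsetSum _ fun m _ => hFc m).const_smul _
  have hRc : Continuous R := continuousOn_univ.1 (hRconv.continuousOn isOpen_univ)
  have hHc : ∀ m, Continuous (H m) := fun m =>
    continuousOn_univ.1 ((hHconv m).continuousOn isOpen_univ)
  have hder : ∀ x d t, HasDerivAt (fun t : ℝ => f (x + t • d)) ⟪g (x + t • d), d⟫ t := by
    intro x d t
    have h1 := (HasDerivAt.fun_sum fun m (_ : m ∈ Finset.univ) =>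
      cv_line_deriv (hFgrad m) x d t).const_mul (1 / (M : ℝ))
    rw [hf, hg]
    simp only [real_inner_smul_left, sum_inner]
    exact h1
  have hfc : ConvexOn ℝ Set.univ f := by
    refine ⟨convex_univ, fun p _ q _ a b ha hb hab => ?_⟩
    have h1 := Finset.sum_le_sum fun m (_ : m ∈ Finset.univ) =>
      (hFconv m).2 (Set.mem_univ p) (Set.mem_univ q) ha hb hab
    have h2 := mul_le_mul_of_nonneg_left h1 (by positivity : 0 ≤ 1 / (M : ℝ))
    simp only [smul_eq_mul, Finset.sum_add_distrib, ← Finset.mul_sum] at h2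
    simp only [hf, smul_eq_mul]
    linarith
  have hgL : ∀ z z', ‖g z - g z'‖ ≤ L * ‖z - z'‖ := by
    intro z z'
    have h1 : ‖∑ m, (F' m z - F' m z')‖ ^ 2 ≤ ∑ m, (1 / ω m) * ‖F' m z - F' m z'‖ ^ 2 := by
      have h2 : ‖∑ m, (F' m z - F' m z')‖ ≤ ∑ m, ‖F' m z - F' m z'‖ := norm_sum_le _ _
      have h3 := Finset.sum_sq_le_sum_mul_sum_of_sq_eq_mul Finset.univ
        (r := fun m => ‖F' m z - F' m z'‖) (f := ω)
        (g := fun m => (1 / ω m) * ‖F' m z - F' m z'‖ ^ 2) (fun m _ => (hω m).le)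
        (fun m _ => by have := hω m; positivity)
        (fun m _ => by have := (hω m).ne'; field_simp)
      rw [hωsum, one_mul] at h3
      exact (pow_le_pow_left₀ (norm_nonneg _) h2 2).trans h3
    have h4 : ‖g z - g z'‖ ^ 2 ≤ (L * ‖z - z'‖) ^ 2 := by
      have e : g z - g z' = (1 / (M : ℝ)) • ∑ m, (F' m z - F' m z') := by
        rw [hg, Finset.sum_sub_distrib, smul_sub]
      rw [e, norm_smul, mul_pow, mul_pow L, Real.norm_eq_abs, sq_abs, one_div, inv_pow, ← one_div]
      exact le_trans (by gcongr) (havg z z')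
    exact le_of_sq_le_sq h4 (by positivity)
  have hco := cv_coco_three hL hfc hder hgL
  have haall : ∀ k m, a k m = (ContinuousLinearMap.adjoint (K m)) (u k m) + F' m (x k) := by
    intro k m
    cases k with
    | zero => exact ha0 m
    | succ k => exact ha k m
  choose p hp hup using hu
  have hxsub : ∀ k, IsSubgradientAt R (x (k + 1)) ((1 / γ) • (x k - x (k + 1)) - g (x k)
      - (1 / (M : ℝ)) • ∑ m, (ContinuousLinearMap.adjoint (K m)) (u k m)) := by
    intro k y
    have h1 := cv_prox_subgrad hRconv hγ0 (hx k) y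
    have e : x k - (γ / (M : ℝ)) • ∑ m, a k m - x (k + 1)
        = γ • ((1 / γ) • (x k - x (k + 1)) - g (x k)
      - (1 / (M : ℝ)) • ∑ m, (ContinuousLinearMap.adjoint (K m)) (u k m)) := by
      simp only [haall, Finset.sum_add_distrib, hg, smul_sub, smul_smul, smul_add]
      rw [mul_one_div_cancel hγ0.ne', one_smul, one_smul, mul_one_div]
      abel
    rw [e, real_inner_smul_left, ← mul_add] at h1
    exact le_of_mul_le_mul_left h1 hγ0
  have hpsub : ∀ k m, IsSubgradientAt (H m) (p k m) (u (k + 1) m) := by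
    intro k m y
    have hs := hs0 m
    have hs' : 0 < 1 / ((M : ℝ) * ω m * σ) := by positivity
    have h1 := cv_prox_subgrad (hHconv m) hs' (hp k m) y
    have e : (1 / ((M : ℝ) * ω m * σ)) •
          (u k m + ((M : ℝ) * ω m * σ) • K m ((2:ℝ) • x (k+1) - x k)) - p k m
        = (1 / ((M : ℝ) * ω m * σ)) • u (k + 1) m := by
      rw [hup k m, smul_sub _ _ (((M : ℝ) * ω m * σ) • p k m), smul_smul _ _ (p k m),
        one_div_mul_cancel hs.ne', one_smul]
    rw [e, real_inner_smul_left, ← mul_add] at h1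
    exact le_of_mul_le_mul_left h1 hs'
  obtain ⟨c, hc, hcoer⟩ := cvP_coercive hM K hω hωsum hL hγ0 hσ0 hparam
  obtain ⟨S, hS⟩ : ∃ S : Set (𝒳 × (∀ m, 𝒰 m)), S = {z | IsSubgradientAt R z.1 (- g z.1
      - (1 / (M : ℝ)) • ∑ m, (ContinuousLinearMap.adjoint (K m)) (z.2 m)) ∧
      ∀ m, IsSubgradientAt (H m) (K m z.1) (z.2 m)} := ⟨_, rfl⟩
  have hPc : Continuous (cvP K γ σ ω) := by
    unfold cvP
    fun_prop
  have hfej := cv_fejer (cvP K γ σ ω) hPc (by simp [cvP]) hc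
    (fun z => le_trans (by have : 0 ≤ L / 2 * ‖z.1‖ ^ 2 := by positivity
                           linarith) (hcoer z)) S
    ⟨(xstar, hstar), by
      rw [hS]
      refine ⟨?_, hhstar⟩
      have e : rstar = - g xstar
          - (1 / (M : ℝ)) • ∑ m, (ContinuousLinearMap.adjoint (K m)) (hstar m) := by
        rw [eq_neg_of_add_eq_zero_left hopt, hg, Finset.sum_add_distrib, smul_add]
        abel
      rw [e] at hrstar
      exact hrstar⟩
    (fun k => (x k, u k))
    (by
      rintro ⟨y, h⟩ hyh k
      rw [hS] at hyh
      have h1 := cvP_step hM K hω hγ0 hσ0 hco (hxsub k) hyh.1 (hpsub k) hyh.2 (hup k)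
      have h2 := hcoer ((x (k + 1), u (k + 1)) - (x k, u k))
      simp only [Prod.fst_sub] at h2
      linarith)
    (by
      rintro ⟨xb, ub⟩ φ h1 h2
      have hx1 : Tendsto (fun n => x (φ n)) atTop (𝓝 xb) := (continuous_fst.tendsto _).comp h1
      have hx2 : Tendsto (fun n => x (φ n + 1)) atTop (𝓝 xb) := (continuous_fst.tendsto _).comp h2
      have hu1 : ∀ m, Tendsto (fun n => u (φ n) m) atTop (𝓝 (ub m)) := fun m =>
        (((continuous_apply m).comp continuous_snd).tendsto (xb, ub)).comp h1
      have hu2 : ∀ m, Tendsto (fun n => u (φ n + 1) m) atTop (𝓝 (ub m)) := fun m =>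
        (((continuous_apply m).comp continuous_snd).tendsto (xb, ub)).comp h2
      rw [hS]
      constructor
      · intro y
        have hlim : Tendsto (fun n => R (x (φ n + 1)) + ⟪(1 / γ) • (x (φ n) - x (φ n + 1))
            - g (x (φ n)) - (1 / (M : ℝ)) • ∑ m, (ContinuousLinearMap.adjoint (K m)) (u (φ n) m),
            y - x (φ n + 1)⟫) atTop (𝓝 (R xb + ⟪(1 / γ) • (xb - xb)
            - g xb - (1 / (M : ℝ)) • ∑ m, (ContinuousLinearMap.adjoint (K m)) (ub m),
            y - xb⟫)) := by
          refine ((hRc.tendsto _).comp hx2).add (Tendsto.inner ?_ (hx2.const_sub y))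
          refine (((hx1.sub hx2).const_smul _).sub ((hgc.tendsto _).comp hx1)).sub ?_
          refine Tendsto.const_smul (tendsto_finsetSum _ fun m _ => ?_) _
          exact ((ContinuousLinearMap.adjoint (K m)).continuous.tendsto _).comp (hu1 m)
        have := le_of_tendsto' hlim (fun n => hxsub (φ n) y)
        simpa using this
      · intro m y
        have hpe : ∀ n, p (φ n) m = (1 / ((M : ℝ) * ω m * σ)) • (u (φ n) m - u (φ n + 1) m)
            + K m ((2:ℝ) • x (φ n + 1) - x (φ n)) := by
          intro n
          have hs := (hs0 m).ne'
          rw [hup (φ n) m]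
          have : u (φ n) m - (u (φ n) m + ((M : ℝ) * ω m * σ) •
              K m ((2:ℝ) • x (φ n + 1) - x (φ n)) - ((M : ℝ) * ω m * σ) • p (φ n) m)
              = ((M : ℝ) * ω m * σ) • (p (φ n) m - K m ((2:ℝ) • x (φ n + 1) - x (φ n))) := by
            rw [smul_sub]; abel
          rw [this, smul_smul, one_div_mul_cancel hs, one_smul]
          abel
        have hpl : Tendsto (fun n => p (φ n) m) atTop (𝓝 (K m xb)) := by
          simp only [hpe]
          have h3 := (((hu1 m).sub (hu2 m)).const_smul (1 / ((M : ℝ) * ω m * σ))).add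
            (((K m).continuous.tendsto _).comp ((hx2.const_smul (2:ℝ)).sub hx1))
          have e : (1 / ((M : ℝ) * ω m * σ)) • (ub m - ub m) + K m ((2:ℝ) • xb - xb)
              = K m xb := by
            rw [sub_self, smul_zero, zero_add]
            congr 1
            module
          rw [e] at h3
          exact h3
        exact le_of_tendsto' ((((hHc m).tendsto _).comp hpl).add
          ((hu2 m).inner (hpl.const_sub y))) (fun n => hpsub (φ n) m y))
  obtain ⟨⟨xb, ub⟩, hzS, hlim⟩ := hfej
  refine ⟨xb, fun y => ?_, (continuous_fst.tendsto _).comp hlim, fun m => ⟨ub m,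
    (((continuous_apply m).comp continuous_snd).tendsto (xb, ub)).comp hlim⟩⟩
  rw [hS] at hzS
  have h1 : R xb + ⟪- g xb - (1 / (M : ℝ)) • ∑ m, (ContinuousLinearMap.adjoint (K m)) (ub m),
    y - xb⟫ ≤ R y := hzS.1 y
  have h2 := cv_grad_subgrad hfc hder xb y
  have h3 := mul_le_mul_of_nonneg_left (Finset.sum_le_sum fun m (_ : m ∈ Finset.univ) =>
    hzS.2 m (K m y)) (by positivity : 0 ≤ 1 / (M : ℝ))
  have e2 : ⟪∑ m, (ContinuousLinearMap.adjoint (K m)) (ub m), y - xb⟫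
      = ∑ m, ⟪ub m, K m y - K m xb⟫ := by
    rw [sum_inner]
    refine Finset.sum_congr rfl fun m _ => ?_
    rw [ContinuousLinearMap.adjoint_inner_left, map_sub]
  rw [inner_sub_left, inner_neg_left, real_inner_smul_left, e2] at h1
  rw [Finset.sum_add_distrib, mul_add] at h3
  simp only [hf] at h2
  rw [Finset.sum_add_distrib, Finset.sum_add_distrib, mul_add, mul_add]
  simp only at h3
  linarith
end
end
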